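/- arXiv:2605.15992 — 2 statements merged into one kernel-verified Lean document; each statement's English description precedes it below -/
import Mathlib

section
/- Let S be a polynomial ring over a field k, let x, y be linearly independent linear forms in S, and let J = (q_1, …, q_t) ⊆ S be an ideal generated by homogeneous quadrics with J ⊆ (x,y). Write q_i = a_i x + b_i y with a_i, b_i linear forms, and set m = (x, y, a_1, …, a_t, b_1, …, b_t). Then every associated prime p of S/J with p ≠ m satisfies height(p) ≤ t. -/
open CategoryTheory Opposite

universe u

/-- The height of an ideal: the infimum of the heights (in the prime spectrum,
ordered by inclusion) of the primes containing it. -/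
noncomputable def Ideal.heightENat {R : Type u} [CommRing R] (I : Ideal R) : ℕ∞ :=
  ⨅ (p : PrimeSpectrum R) (_ : I ≤ p.asIdeal), Order.height p

/-- The projective dimension of an `R`-module `M`: the least `n` such that
`Ext^i(M, N) = 0` for all `i > n` and all modules `N` (and `⊤` if no such `n` exists). -/
noncomputable def projDim (R : Type u) [CommRing R] (M : Type u) [AddCommGroup M]
    [Module R M] : ℕ∞ :=
  sInf ((↑) '' {n : ℕ | ∀ i : ℕ, n < i → ∀ N : ModuleCat.{u} R,
    Subsingleton (((Ext R (ModuleCat.{u} R) i).obj (op (ModuleCat.of R M))).obj N)})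

/-- The Hilbert function of the standard graded ring `S/J`, where
`S = k[x_1, ..., x_N]`: the `k`-dimension of the degree-`d` graded piece of `S/J`. -/
noncomputable def hilbertFunction (k : Type u) [Field k] {N : ℕ}
    (J : Ideal (MvPolynomial (Fin N) k)) (d : ℕ) : ℕ :=
  Module.finrank k (Submodule.map (Ideal.Quotient.mkₐ k J).toLinearMap
    (MvPolynomial.homogeneousSubmodule (Fin N) k d))

open scoped Classical in
/-- The Hilbert–Samuel multiplicity `e(S/J)` of the graded ring `S/J`:
`(deg P)!` times the leading coefficient of the Hilbert polynomial `P` of `S/J`,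
i.e. of the polynomial agreeing with the Hilbert function in all large degrees
(the degree of the Hilbert polynomial being `dim(S/J) - 1`). -/
noncomputable def hilbertSamuelMultiplicity (k : Type u) [Field k] {N : ℕ}
    (J : Ideal (MvPolynomial (Fin N) k)) : ℚ :=
  if h : ∃ P : Polynomial ℚ, ∀ᶠ d : ℕ in Filter.atTop,
      (hilbertFunction k J d : ℚ) = P.eval (d : ℚ)
  then (h.choose.natDegree).factorial * h.choose.leadingCoeff
  else 0

/-!
Assume first that `x ∉ p`. After adjoining a variable `u` that stands for `y / x`, the prime `p`
becomes an associated prime, of height larger by one, of the ideal of `S[u]` generated by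
`x * u - y` and the `a i + u * b i`. These are `t + 1` linear forms over the principal ideal domain
`k[u]`, so by Smith normal form they may be taken to be multiples `d j * X j` of the variables.
The associated primes of such an ideal are multigraded, which makes them explicit, and their height
is at most the number of generators.

If `x` and `y` lie in `p` but some `a j` does not, then `p` is associated to `J : y` or to
`J + (y)`. Locally at `p` the latter is `(x, y)`, and the former is generated by
`a j * x + b j * y` and the minors `b i * a j - a i * b j`, to which the first case applies with
`a j`, `b j` in the roles of `x`, `y`. Finally, if `p` contains `m`, then `p` is extended from an
associated prime of the subring generated by the linear forms in `m`, hence equal to `m`.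
-/

section Multigraded

open MvPolynomial
open scoped Pointwise

variable {σ R : Type*} [CommRing R] {I J : Ideal (MvPolynomial σ R)}

/-- An ideal of a polynomial ring is multigraded if it contains every term of each of its elements,
i.e. if it is homogeneous for the grading by exponent vectors. The coefficient ring sits in degree
`0`, so the ideals extended from the coefficient ring are multigraded too. -/
def IsMultigraded (I : Ideal (MvPolynomial σ R)) : Prop :=
  ∀ p ∈ I, ∀ m, monomial m (p.coeff m) ∈ I

theorem nonempty_monomialOrder (σ : Type u) : Nonempty (MonomialOrder.{u, u} σ) := by
  classical
  let : LinearOrder σ := linearOrderOfSTO (Function.swap WellOrderingRel)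
  have : WellFoundedGT σ := ⟨(inferInstance : IsWellFounded σ WellOrderingRel).wf⟩
  exact ⟨.lex⟩

theorem card_support_sub_leadingTerm_lt (ord : MonomialOrder σ) {p : MvPolynomial σ R}
    (hp : p ≠ 0) : (p - ord.leadingTerm p).support.card < p.support.card := by
  classical
  refine Finset.card_lt_card ⟨fun m hm ↦ ?_, fun h ↦ ?_⟩
  · by_contra hmp
    have hne : ord.degree p ≠ m := fun h ↦ hmp (h ▸ ord.degree_mem_support hp)
    simp_all [MonomialOrder.leadingTerm]
  · have := h (ord.degree_mem_support hp)
    simp [MonomialOrder.leadingTerm, MonomialOrder.leadingCoeff] at this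

theorem isMultigraded_of_leadingTerm_mem (ord : MonomialOrder σ)
    (h : ∀ p ∈ I, ord.leadingTerm p ∈ I) : IsMultigraded I := by
  classical
  intro p
  induction hn : p.support.card using Nat.strong_induction_on generalizing p with | _ n ih
  intro hp m
  rcases eq_or_ne p 0 with rfl | hp0
  · simp
  by_cases hm : ord.degree p = m
  · exact hm ▸ h p hp
  · have hterm := ih _ (hn ▸ card_support_sub_leadingTerm_lt ord hp0) _ rfl
      (I.sub_mem hp (h p hp)) m
    simpa [MonomialOrder.leadingTerm, coeff_monomial, hm] using hterm

theorem card_support_monomial_mul_le (m : σ →₀ ℕ) (c : R) (p : MvPolynomial σ R) :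
    (monomial m c * p).support.card ≤ p.support.card := by
  classical
  calc (monomial m c * p).support.card
      ≤ ((monomial m c).support + p.support).card := Finset.card_le_card (support_mul _ _)
    _ ≤ (monomial m c).support.card * p.support.card := Finset.card_add_le
    _ ≤ 1 * p.support.card := by gcongr; exact Finset.card_le_card support_monomial_subset
    _ = p.support.card := one_mul _

/-- If the leading term `u` of an element of `J : f` is not in that prime, then `u (f - lt f)` is
another witness for it, with fewer terms than `f`. -/
theorem IsMultigraded.leadingTerm_mem_colon (hJ : IsMultigraded J) (ord : MonomialOrder σ)
    {f : MvPolynomial σ R} (hP : (J.colon {f}).IsPrime) {g : MvPolynomial σ R}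
    (hg : g ∈ J.colon {f}) : ord.leadingTerm g ∈ J.colon {f} := by
  induction hn : f.support.card using Nat.strong_induction_on generalizing f with | _ n ih
  by_contra hu
  have hf0 : f ≠ 0 := by rintro rfl; exact hP.ne_top (by simp)
  have huv : ord.leadingTerm g * ord.leadingTerm f ∈ J := by
    have := hJ _ (Submodule.mem_colon_singleton.mp hg) (ord.degree g + ord.degree f)
    rwa [smul_eq_mul, ord.coeff_mul_of_degree_add, ← monomial_mul] at this
  have hcolon : J.colon {ord.leadingTerm g * (f - ord.leadingTerm f)} = J.colon {f} := by
    ext r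
    rw [← (hP.mul_mem_right_iff hu : r * _ ∈ _ ↔ _)]
    simp only [Submodule.mem_colon_singleton, smul_eq_mul]
    rw [mul_sub, mul_sub, ← mul_assoc, J.sub_mem_iff_left (J.mul_mem_left r huv)]
  refine hu (hcolon ▸ ih _ ?_ (hcolon ▸ hP) (hcolon ▸ hg) rfl)
  exact hn ▸ (card_support_monomial_mul_le _ _ _).trans_lt (card_support_sub_leadingTerm_lt ord hf0)

theorem IsMultigraded.colon_of_isPrime (hJ : IsMultigraded J) {f : MvPolynomial σ R}
    (hP : (J.colon {f}).IsPrime) : IsMultigraded (J.colon {f}) := by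
  obtain ⟨ord⟩ := nonempty_monomialOrder σ
  exact isMultigraded_of_leadingTerm_mem ord fun g ↦ hJ.leadingTerm_mem_colon ord hP

theorem IsMultigraded.exists_colon_monomial_eq (hJ : IsMultigraded J) {f : MvPolynomial σ R}
    (hP : (J.colon {f}).IsPrime) :
    ∃ m c, J.colon {f} = J.colon {monomial m c} := by
  have hle : (f.support.inf fun m ↦ J.colon {monomial m (f.coeff m)}) ≤ J.colon {f} := by
    intro r hr
    rw [Submodule.mem_colon_singleton, smul_eq_mul, f.as_sum, Finset.mul_sum]
    exact J.sum_mem fun m hm ↦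
      Submodule.mem_colon_singleton.mp (Submodule.mem_finsetInf.mp hr m hm)
  obtain ⟨m, -, hm⟩ := hP.inf_le'.mp hle
  refine ⟨m, f.coeff m, le_antisymm (fun r hr ↦ ?_) hm⟩
  have h := hJ.colon_of_isPrime hP r hr
  rw [r.as_sum]
  refine Ideal.sum_mem _ fun n _ ↦ ?_
  have hterm := hJ _ (Submodule.mem_colon_singleton.mp (h n)) (n + m)
  rw [smul_eq_mul, coeff_monomial_mul, ← monomial_mul] at hterm
  exact Submodule.mem_colon_singleton.mpr hterm

theorem isMultigraded_map_C (I : Ideal R) :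
    IsMultigraded (I.map (C : R →+* MvPolynomial σ R)) := by
  classical
  intro p hp m
  rw [mem_map_C_iff] at hp ⊢
  intro n
  rw [coeff_monomial]
  split_ifs
  exacts [hp m, I.zero_mem]

theorem map_C_colon_monomial (I : Ideal R) (m : σ →₀ ℕ) (c : R) :
    (I.map (C : R →+* MvPolynomial σ R)).colon {monomial m c} = (I.colon {c}).map C := by
  ext r
  simp only [Submodule.mem_colon_singleton, smul_eq_mul, mem_map_C_iff]
  refine ⟨fun h n ↦ coeff_mul_monomial n m c r ▸ h (n + m), fun h n ↦ ?_⟩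
  rw [coeff_mul_monomial']
  split_ifs
  exacts [h _, I.zero_mem]

theorem eq_map_comap_C_of_isAssociatedPrime_map_C [IsNoetherianRing R] [Finite σ] {I : Ideal R}
    {P : Ideal (MvPolynomial σ R)} (hP : (I.map C).IsAssociatedPrime P) :
    P = (P.comap C).map C := by
  obtain ⟨hprime, f, rfl⟩ := Submodule.isAssociatedPrime_iff.mp hP
  obtain ⟨m, c, h⟩ := (isMultigraded_map_C I).exists_colon_monomial_eq hprime
  rw [h, map_C_colon_monomial, Ideal.map_comap_map]

theorem IsMultigraded.eq_map_comap_C_sup_span_X {P : Ideal (MvPolynomial σ R)} [P.IsPrime]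
    (hP : IsMultigraded P) :
    P = (P.comap C).map C ⊔ Ideal.span (X '' {i | X i ∈ P}) := by
  refine le_antisymm (fun p hp ↦ ?_) (sup_le Ideal.map_comap_le ?_)
  · rw [p.as_sum]
    refine Ideal.sum_mem _ fun m _ ↦ ?_
    have hterm := hP p hp m
    rw [monomial_eq, Finsupp.prod, ‹P.IsPrime›.mul_mem_iff_mem_or_mem,
      Ideal.IsPrime.prod_mem_iff] at hterm
    rw [monomial_eq, Finsupp.prod]
    obtain hC | ⟨i, hi, hX⟩ := hterm
    · exact Ideal.mul_mem_right _ _ (Ideal.mem_sup_left (Ideal.mem_map_of_mem C hC))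
    · have hiX : (X i : MvPolynomial σ R) ∈ Ideal.span (X '' {i | (X i : MvPolynomial σ R) ∈ P}) :=
        Ideal.subset_span ⟨i, Ideal.IsPrime.mem_of_pow_mem ‹_› _ hX, rfl⟩
      exact Ideal.mem_sup_right (Ideal.mul_mem_left _ _ (Ideal.mem_of_dvd _
        ((dvd_pow_self _ (Finsupp.mem_support_iff.mp hi)).trans (Finset.dvd_prod_of_mem _ hi)) hiX))
  · rw [Ideal.span_le]
    rintro _ ⟨i, hi, rfl⟩
    exact hi

/-- The ideal generated by the multiples `d i * X i` of the variables. -/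
noncomputable def diagonalIdeal (d : σ → R) : Ideal (MvPolynomial σ R) :=
  Ideal.span (Set.range fun i ↦ C (d i) * X i)

theorem monomial_mem_diagonalIdeal {d : σ → R} {m : σ →₀ ℕ} {c : R}
    (hc : c ∈ Ideal.span (d '' m.support)) : monomial m c ∈ diagonalIdeal d := by
  suffices Ideal.span (d '' m.support) ≤
      ((diagonalIdeal d).restrictScalars R).comap (monomial m) from this hc
  rw [Ideal.span_le]
  rintro _ ⟨i, hi, rfl⟩
  have hle : Finsupp.single i 1 ≤ m := by
    simpa [Finsupp.single_le_iff, Nat.one_le_iff_ne_zero] using hi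
  have hfactor : monomial m (d i) = monomial (m - Finsupp.single i 1) 1 * (C (d i) * X i) := by
    rw [X, C_mul_monomial, monomial_mul, tsub_add_cancel_of_le hle, one_mul, mul_one]
  have hgen : C (d i) * X i ∈ diagonalIdeal d := Ideal.subset_span ⟨i, rfl⟩
  simpa [hfactor] using Ideal.mul_mem_left _ _ hgen

theorem mem_diagonalIdeal_iff {d : σ → R} {p : MvPolynomial σ R} :
    p ∈ diagonalIdeal d ↔ ∀ m, p.coeff m ∈ Ideal.span (d '' m.support) := by
  classical
  refine ⟨fun hp ↦ ?_, fun h ↦ ?_⟩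
  · induction hp using Submodule.span_induction with
    | mem p hp =>
      obtain ⟨i, rfl⟩ := hp
      intro m
      rw [coeff_C_mul, coeff_X]
      split_ifs with h
      · exact Ideal.mul_mem_right _ _ (Ideal.subset_span ⟨i, by simp [← h], rfl⟩)
      · simp
    | zero => simp
    | add p q _ _ hp hq => exact fun m ↦ Ideal.add_mem _ (hp m) (hq m)
    | smul r p _ hp =>
      intro m
      rw [smul_eq_mul, coeff_mul]
      refine Ideal.sum_mem _ fun x hx ↦ Ideal.mul_mem_left _ _ (Ideal.span_mono ?_ (hp x.2))
      exact Set.image_mono (Finsupp.support_mono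
        (Finset.HasAntidiagonal.mem_antidiagonal.mp hx ▸ le_add_self))
  · rw [p.as_sum]
    exact Ideal.sum_mem _ fun m _ ↦ monomial_mem_diagonalIdeal (h m)

theorem monomial_mem_diagonalIdeal_iff {d : σ → R} {m : σ →₀ ℕ} {c : R} :
    monomial m c ∈ diagonalIdeal d ↔ c ∈ Ideal.span (d '' m.support) := by
  classical
  refine ⟨fun h ↦ ?_, monomial_mem_diagonalIdeal⟩
  simpa using mem_diagonalIdeal_iff.mp h m

theorem isMultigraded_diagonalIdeal (d : σ → R) : IsMultigraded (diagonalIdeal d) :=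
  fun _ hp m ↦ monomial_mem_diagonalIdeal (mem_diagonalIdeal_iff.mp hp m)

end Multigraded

theorem height_le_ncard_of_span_eq {R : Type*} [CommRing R] [IsNoetherianRing R] {P : Ideal R}
    [P.IsPrime] {s : Set R} (hs : s.Finite) (hP : P = Ideal.span s) : P.height ≤ s.ncard :=
  Ideal.height_le_card_of_mem_minimalPrimes_span hs
    (by rw [← hP, Ideal.minimalPrimes_eq_subsingleton_self]; rfl)

section Diagonal

open MvPolynomial

variable {σ B : Type*} [CommRing B] {d : σ → B} {P : Ideal (MvPolynomial σ B)}

theorem setOf_X_mem_colon_diagonalIdeal_subset {m : σ →₀ ℕ} {c : B}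
    (hc : c ∉ Ideal.span (d '' m.support)) :
    {i | X i ∈ (diagonalIdeal d).colon {monomial m c}} ⊆ {i | d i ≠ 0} \ m.support := by
  classical
  intro i hi
  rw [Set.mem_ofPred_eq, Submodule.mem_colon_singleton, smul_eq_mul, X, monomial_mul, one_mul,
    monomial_mem_diagonalIdeal_iff] at hi
  have hsupp : ((Finsupp.single i 1 + m).support : Set σ) = insert i (m.support : Set σ) := by
    ext j
    simp [Finsupp.single_apply, or_iff_not_imp_left, eq_comm]
  rw [hsupp, Set.image_insert_eq] at hi
  constructor
  · intro h0
    rw [h0, Ideal.span_insert_zero] at hi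
    exact hc hi
  · intro hmem
    rw [Set.insert_eq_of_mem (Set.mem_image_of_mem d hmem)] at hi
    exact hc hi

theorem exists_mem_support_ne_zero_of_C_mem_colon [IsDomain B] {m : σ →₀ ℕ} {c r : B}
    (hc : c ∉ Ideal.span (d '' m.support)) (hr : r ≠ 0)
    (hmem : C r ∈ (diagonalIdeal d).colon {monomial m c}) : ∃ j ∈ m.support, d j ≠ 0 := by
  by_contra! h
  have hbot : Ideal.span (d '' m.support) = ⊥ := by
    rw [Ideal.span_eq_bot]
    rintro _ ⟨j, hj, rfl⟩
    exact h j hj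
  rw [Submodule.mem_colon_singleton, smul_eq_mul, C_mul_monomial, monomial_mem_diagonalIdeal_iff,
    hbot, Ideal.mem_bot, mul_eq_zero, or_iff_right hr] at hmem
  exact hc (hmem ▸ Ideal.zero_mem _)

theorem height_le_ncard_of_isAssociatedPrime_diagonalIdeal [IsDomain B] [IsPrincipalIdealRing B]
    [Finite σ] (hP : (diagonalIdeal d).IsAssociatedPrime P) :
    P.height ≤ {i | d i ≠ 0}.ncard := by
  obtain ⟨hprime, f, rfl⟩ := Submodule.isAssociatedPrime_iff.mp hP
  have hmulti := (isMultigraded_diagonalIdeal d).colon_of_isPrime hprime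
  obtain ⟨m, c, hmc⟩ := (isMultigraded_diagonalIdeal d).exists_colon_monomial_eq hprime
  rw [hmc] at hprime hmulti ⊢
  set P := (diagonalIdeal d).colon {monomial m c} with hP
  have hc : c ∉ Ideal.span (d '' m.support) := by
    rw [← monomial_mem_diagonalIdeal_iff]
    intro h
    exact hprime.ne_top (by simpa [hP] using h)
  have hsub := setOf_X_mem_colon_diagonalIdeal_subset hc
  have hspan := hmulti.eq_map_comap_C_sup_span_X
  obtain ⟨π, hπ⟩ := (IsPrincipalIdealRing.principal (P.comap C)).principal
  rw [Ideal.submodule_span_eq] at hπ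
  rcases eq_or_ne π 0 with rfl | hπ0
  · rw [hπ, Ideal.span_singleton_zero, Ideal.map_bot, bot_sup_eq] at hspan
    refine (height_le_ncard_of_span_eq (Set.toFinite _) hspan).trans ?_
    exact_mod_cast (Set.ncard_image_le).trans (Set.ncard_le_ncard (hsub.trans Set.sdiff_subset))
  · rw [hπ, Ideal.map_span, Set.image_singleton, ← Ideal.span_union] at hspan
    have hπP : C π ∈ P := Ideal.mem_comap.mp (hπ ▸ Ideal.mem_span_singleton_self π)
    obtain ⟨j, hj, hdj⟩ := exists_mem_support_ne_zero_of_C_mem_colon hc hπ0 hπP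
    have hlt := Set.ncard_lt_ncard ((Set.ssubset_iff_of_subset (hsub.trans Set.sdiff_subset)).mpr
      ⟨j, hdj, fun h ↦ (hsub h).2 hj⟩)
    calc P.height
      _ ≤ ({C π} ∪ X '' {i | X i ∈ P} : Set (MvPolynomial σ B)).ncard :=
        height_le_ncard_of_span_eq (Set.toFinite _) hspan
      _ ≤ ({i | X i ∈ P}.ncard + 1 : ℕ) := by
        norm_cast
        rw [Set.singleton_union]
        exact (Set.ncard_insert_le _ _).trans (Nat.succ_le_succ Set.ncard_image_le)
      _ ≤ {i | d i ≠ 0}.ncard := mod_cast hlt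

end Diagonal

section AssociatedPrimes

variable {R : Type*} [CommRing R] {I J P : Ideal R}

theorem isAssociatedPrime_quotient_iff :
    IsAssociatedPrime P (R ⧸ J) ↔ J.IsAssociatedPrime P := by
  have hcolon (f : R) : (⊥ : Submodule R (R ⧸ J)).colon {Ideal.Quotient.mk J f} = J.colon {f} := by
    ext r
    simp [Submodule.mem_colon_singleton, Algebra.smul_def, ← map_mul,
      Ideal.Quotient.eq_zero_iff_mem]
  refine ⟨fun ⟨hP, f, hf⟩ ↦ ?_, fun ⟨hP, f, hf⟩ ↦ ⟨hP, Ideal.Quotient.mk J f, hcolon f ▸ hf⟩⟩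
  obtain ⟨f, rfl⟩ := Ideal.Quotient.mk_surjective f
  exact ⟨hP, f, hcolon f ▸ hf⟩

theorem isAssociatedPrime_comap_of_map {S : Type*} [CommRing S] (e : R ≃+* S) {P : Ideal S}
    (hP : (J.map e).IsAssociatedPrime P) : J.IsAssociatedPrime (P.comap e) := by
  obtain ⟨hprime, f, rfl⟩ := hP
  refine ⟨hprime.comap e, e.symm f, ?_⟩
  ext r
  simp [Ideal.mem_radical_iff, Submodule.mem_colon_singleton, ← Ideal.comap_symm]

variable [IsNoetherianRing R]

theorem isAssociatedPrime_of_mem_minimalPrimes_colon {f : R}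
    (hP : P ∈ (J.colon {f}).minimalPrimes) : J.IsAssociatedPrime P :=
  Submodule.isAssociatedPrime_iff.mpr
    ⟨hP.1.1, Submodule.exists_eq_colon_of_mem_minimalPrimes hP⟩

/-- The hypotheses say that `I` and `J` agree after localization at `P`. -/
theorem isAssociatedPrime_of_locally_eq (hP : I.IsAssociatedPrime P)
    (hIJ : ∀ r ∈ I, ∃ s ∉ P, s * r ∈ J) (hJI : ∀ r ∈ J, ∃ s ∉ P, s * r ∈ I) :
    J.IsAssociatedPrime P := by
  obtain ⟨hprime, f, hf⟩ := Submodule.isAssociatedPrime_iff.mp hP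
  have mem_iff (r : R) : r ∈ P ↔ r * f ∈ I := by rw [hf, Submodule.mem_colon_singleton, smul_eq_mul]
  refine isAssociatedPrime_of_mem_minimalPrimes_colon (f := f) ⟨⟨hprime, fun r hr ↦ ?_⟩, ?_⟩
  · obtain ⟨s, hs, hsr⟩ := hJI _ (Submodule.mem_colon_singleton.mp hr)
    refine (hprime.mem_or_mem ((mem_iff (s * r)).mpr ?_)).resolve_left hs
    rwa [mul_assoc]
  · intro Q ⟨hQ, hle⟩ hQP r hr
    obtain ⟨s, hs, hsr⟩ := hIJ _ ((mem_iff r).mp hr)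
    refine (hQ.mem_or_mem (hle ?_)).resolve_left fun h ↦ hs (hQP h)
    rwa [Submodule.mem_colon_singleton, smul_eq_mul, mul_assoc]

end AssociatedPrimes

section LinearForms

open MvPolynomial Module

/-- The variables, as a basis of the module of linear forms. -/
noncomputable def basisX (σ R : Type*) [CommRing R] : Basis σ R (homogeneousSubmodule σ R 1) :=
  (Basis.span (linearIndependent_X σ R)).map
    (LinearEquiv.ofEq _ _ homogeneousSubmodule_one_eq_span_X.symm)

@[simp]
theorem coe_basisX {σ R : Type*} [CommRing R] (i : σ) :
    (basisX σ R i : MvPolynomial σ R) = X i := by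
  simp [basisX, Basis.span_apply]

/-- The linear change of coordinates sending the variables to a given basis of the module of linear
forms. -/
noncomputable def coordinateChange {σ τ R : Type*} [CommRing R]
    (b : Basis τ R (homogeneousSubmodule σ R 1)) : MvPolynomial τ R ≃ₐ[R] MvPolynomial σ R :=
  (SymmetricAlgebra.equivMvPolynomial b).symm.trans
    (SymmetricAlgebra.equivMvPolynomial (basisX σ R))

@[simp]
theorem coordinateChange_X {σ τ R : Type*} [CommRing R]
    (b : Basis τ R (homogeneousSubmodule σ R 1)) (i : τ) : coordinateChange b (X i) = b i := by
  have h : (SymmetricAlgebra.equivMvPolynomial (basisX σ R)).toLinearMap ∘ₗ SymmetricAlgebra.ι R _ =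
      (homogeneousSubmodule σ R 1).subtype := (basisX σ R).ext fun j ↦ by simp
  simpa [coordinateChange] using LinearMap.congr_fun h (b i)

theorem ideal_span_eq_of_span_eq {R A : Type*} [CommRing R] [CommRing A] [Algebra R A] {s t : Set A}
    (h : Submodule.span R s = Submodule.span R t) : Ideal.span s = Ideal.span t := by
  rw [Ideal.span, ← Submodule.span_span_of_tower R A, h, Submodule.span_span_of_tower, Ideal.span]

theorem map_coordinateChange_diagonalIdeal {σ τ R : Type*} [CommRing R]
    (b : Basis τ R (homogeneousSubmodule σ R 1)) (d : τ → R) :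
    (diagonalIdeal d).map (coordinateChange b : MvPolynomial τ R ≃+* MvPolynomial σ R) =
      Ideal.span (Set.range fun i ↦ ((d i • b i : homogeneousSubmodule σ R 1) :
        MvPolynomial σ R)) := by
  rw [diagonalIdeal, Ideal.map_span, ← Set.range_comp]
  congr! with i
  simp [← smul_eq_C_mul]

theorem span_range_extend {α β R : Type*} [CommRing R] {f : α → β} (hf : f.Injective) (g : α → R) :
    Ideal.span (Set.range (Function.extend f g 0)) = Ideal.span (Set.range g) := by
  refine le_antisymm (Ideal.span_le.mpr ?_) (Ideal.span_mono fun _ ⟨i, hi⟩ ↦ ⟨f i, ?_⟩)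
  · rintro _ ⟨i, rfl⟩
    by_cases hi : ∃ j, f j = i
    · obtain ⟨j, rfl⟩ := hi
      exact hf.extend_apply g 0 j ▸ Ideal.subset_span ⟨j, rfl⟩
    · simp [Function.extend_apply' _ _ _ hi]
  · rw [hf.extend_apply, hi]

/-- Smith normal form of the module spanned by the given linear forms. -/
theorem exists_span_linear_eq_map_diagonalIdeal {σ B ι : Type*} [CommRing B] [IsDomain B]
    [IsPrincipalIdealRing B] [Finite σ] [Fintype ι] {l : ι → MvPolynomial σ B}
    (hl : ∀ i, (l i).IsHomogeneous 1) :
    ∃ (b : Basis σ B (homogeneousSubmodule σ B 1)) (d : σ → B),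
      {i | d i ≠ 0}.ncard ≤ Fintype.card ι ∧ Ideal.span (Set.range l) =
        (diagonalIdeal d).map (coordinateChange b : MvPolynomial σ B ≃+* MvPolynomial σ B) := by
  let l' : ι → homogeneousSubmodule σ B 1 := fun i ↦ ⟨l i, hl i⟩
  obtain ⟨n, bM, bN, f, a, snf⟩ :=
    (Submodule.span B (Set.range l')).smithNormalForm (basisX σ B)
  refine ⟨bM, Function.extend f a 0, ?_, ?_⟩
  · have hn : n ≤ Fintype.card ι := by
      simpa [Set.finrank, finrank_eq_card_basis bN] using finrank_range_le_card (R := B) l'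
    have hsupp : {i | Function.extend f a 0 i ≠ 0} ⊆ Set.range f := by
      intro i hi
      by_contra h
      exact hi (Function.extend_apply' _ _ _ h)
    refine (Set.ncard_le_ncard hsupp).trans ?_
    rwa [Set.ncard_range_of_injective f.injective, Nat.card_fin]
  · have hspan : Ideal.span (Set.range l) =
        Ideal.span (Set.range fun i ↦ (bN i : MvPolynomial σ B)) := by
      refine ideal_span_eq_of_span_eq (R := B) ?_
      have h := congr((Submodule.map (Submodule.subtype _) $(bN.span_eq)).map (Submodule.subtype _))
      rw [Submodule.map_subtype_top, Submodule.map_span, Submodule.map_span, Submodule.map_span,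
        ← Set.range_comp, ← Set.range_comp, ← Set.range_comp] at h
      exact h.symm
    rw [map_coordinateChange_diagonalIdeal, hspan, ← span_range_extend f.injective]
    congr! with i
    by_cases hi : ∃ j, f j = i
    · obtain ⟨j, rfl⟩ := hi
      simp [f.injective.extend_apply, snf]
    · simp [Function.extend_apply' _ _ _ hi]

theorem height_le_card_of_isAssociatedPrime_span_linear {σ B ι : Type*} [CommRing B] [IsDomain B]
    [IsPrincipalIdealRing B] [Finite σ] [Fintype ι] {l : ι → MvPolynomial σ B}
    (hl : ∀ i, (l i).IsHomogeneous 1) {P : Ideal (MvPolynomial σ B)}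
    (hP : (Ideal.span (Set.range l)).IsAssociatedPrime P) : P.height ≤ Fintype.card ι := by
  obtain ⟨b, d, hcard, hspan⟩ := exists_span_linear_eq_map_diagonalIdeal hl
  have hheight := height_le_ncard_of_isAssociatedPrime_diagonalIdeal
    (isAssociatedPrime_comap_of_map _ (hspan ▸ hP))
  rw [RingEquiv.height_comap] at hheight
  exact hheight.trans (mod_cast hcard)

end LinearForms

theorem height_add_one_le_height_comap {A L : Type*} [CommRing A] [IsDomain A] [CommRing L]
    {φ : A →+* L} (hφ : Function.Injective (PrimeSpectrum.comap φ)) (hker : RingHom.ker φ ≠ ⊥)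
    (P : Ideal L) [P.IsPrime] : P.height + 1 ≤ (P.comap φ).height := by
  have hbot (p : PrimeSpectrum L) : ⊥ < PrimeSpectrum.comap φ p :=
    bot_lt_iff_ne_bot.mpr fun h ↦ hker <| eq_bot_iff.mpr <|
      (Ideal.comap_mono bot_le).trans_eq congr(($h).asIdeal)
  let f : WithBot (PrimeSpectrum L) → PrimeSpectrum A :=
    WithBot.recBotCoe ⊥ (PrimeSpectrum.comap φ)
  have hf : StrictMono f := by
    refine WithBot.strictMono_iff.mpr ⟨?_, hbot⟩
    exact Monotone.strictMono_of_injective (fun p q hpq ↦ Ideal.comap_mono hpq) hφ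
  have h := Order.height_le_height_apply_of_strictMono f hf
    ((⟨P, ‹_›⟩ : PrimeSpectrum L) : WithBot (PrimeSpectrum L))
  rwa [Order.height_coe_withBot, ← PrimeSpectrum.height_eq_orderHeight,
    ← PrimeSpectrum.height_eq_orderHeight] at h

section Slope

open Polynomial

variable {R : Type*} [CommRing R]

theorem exists_pow_mul_sub_C_mem (G H : R) (r : R[X]) :
    ∃ n s, C (G ^ n) * r - C s ∈ Ideal.span {C G * X - C H} := by
  induction r using Polynomial.induction_on' with
  | add p q hp hq =>
    obtain ⟨n, s, hs⟩ := hp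
    obtain ⟨m, t, ht⟩ := hq
    refine ⟨n + m, G ^ m * s + G ^ n * t, ?_⟩
    convert Ideal.add_mem _ (Ideal.mul_mem_left _ (C (G ^ m)) hs)
      (Ideal.mul_mem_left _ (C (G ^ n)) ht) using 1
    simp only [map_add, map_mul, map_pow]
    ring
  | monomial n c =>
    refine ⟨n, c * H ^ n, ?_⟩
    rw [Ideal.mem_span_singleton]
    convert (sub_dvd_pow_sub_pow (C G * X) (C H) n).mul_left (C c) using 1
    rw [← C_mul_X_pow_eq_monomial]
    simp only [map_mul, map_pow]
    ring

theorem algebraMap_mem_map_of_C_mem {L : Type*} [CommRing L] [Algebra R L] {J : Ideal R}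
    {G H s : R} {z : L} (hz : algebraMap R L G * z = algebraMap R L H)
    (hs : C s ∈ J.map C ⊔ Ideal.span {C G * X - C H}) :
    algebraMap R L s ∈ J.map (algebraMap R L) := by
  suffices J.map C ⊔ Ideal.span {C G * X - C H} ≤ (J.map (algebraMap R L)).comap (aeval z) by
    simpa using this hs
  refine sup_le (Ideal.map_le_iff_le_comap.mpr fun r hr ↦ ?_) ?_
  · simpa using Ideal.mem_map_of_mem (algebraMap R L) hr
  · simp [hz]

theorem isAssociatedPrime_sup_span_C_mul_X_sub_C [IsNoetherianRing R] {J : Ideal R} {G H : R}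
    {Q : Ideal R[X]} [Q.IsPrime] (hJ : J.IsAssociatedPrime (Q.comap C)) (hG : C G ∉ Q)
    (hGH : C G * X - C H ∈ Q)
    (hsat : ∀ s, C s ∈ J.map C ⊔ Ideal.span {C G * X - C H} → ∃ m ∉ Q.comap C, m * s ∈ J) :
    (J.map C ⊔ Ideal.span {C G * X - C H}).IsAssociatedPrime Q := by
  set K := J.map C ⊔ Ideal.span {C G * X - C H}
  obtain ⟨hprime, f, hf⟩ := Submodule.isAssociatedPrime_iff.mp hJ
  have mem_comap (s : R) : s ∈ Q.comap C ↔ s * f ∈ J := by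
    rw [hf, Submodule.mem_colon_singleton, smul_eq_mul]
  have hspan : Ideal.span {C G * X - C H} ≤ Q := (Ideal.span_singleton_le_iff_mem _).mpr hGH
  refine isAssociatedPrime_of_mem_minimalPrimes_colon (f := C f) ⟨⟨‹_›, fun r hr ↦ ?_⟩, ?_⟩
  · obtain ⟨n, s, hs⟩ := exists_pow_mul_sub_C_mem G H r
    have hsf : C (s * f) ∈ K := by
      convert K.sub_mem (K.mul_mem_left (C (G ^ n)) (Submodule.mem_colon_singleton.mp hr))
        (K.mul_mem_right (C f) (Ideal.mem_sup_right hs)) using 1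
      simp only [map_mul, smul_eq_mul]
      ring
    obtain ⟨m, hm, hmsf⟩ := hsat _ hsf
    have hsQ : C s ∈ Q :=
      (hprime.mem_or_mem ((mem_comap (m * s)).mpr (by rwa [mul_assoc]))).resolve_left hm
    have hr : C (G ^ n) * r ∈ Q := (Q.sub_mem_iff_left hsQ).mp (hspan hs)
    exact (‹Q.IsPrime›.mem_or_mem hr).resolve_left fun h ↦
      hG (‹Q.IsPrime›.mem_of_pow_mem n (by rwa [map_pow] at h))
  · intro Q' ⟨hQ', hle⟩ hQ'Q r hr
    obtain ⟨n, s, hs⟩ := exists_pow_mul_sub_C_mem G H r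
    have hsQ : s ∈ Q.comap C := (Q.sub_mem_iff_right (Q.mul_mem_left _ hr)).mp (hspan hs)
    have hmem : C (G ^ n) * r ∈ K.colon {C f} := by
      rw [Submodule.mem_colon_singleton, smul_eq_mul]
      convert K.add_mem (K.mul_mem_right (C f) (Ideal.mem_sup_right hs))
        (Ideal.mem_sup_left (Ideal.mem_map_of_mem C ((mem_comap s).mp hsQ))) using 1
      simp only [map_mul]
      ring
    exact (hQ'.mem_or_mem (hle hmem)).resolve_left fun h ↦
      hG (hQ'Q (hQ'.mem_of_pow_mem n (by rwa [map_pow] at h)))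

/-- `Q` is the kernel of the map `R[X] → κ(P)` sending `X` to `H / G`. -/
theorem exists_isAssociatedPrime_sup_span_C_mul_X_sub_C [IsNoetherianRing R] [IsDomain R]
    {J P : Ideal R} (hP : J.IsAssociatedPrime P) {G : R} (hG : G ∉ P) (H : R) :
    ∃ Q, (J.map C ⊔ Ideal.span {C G * X - C H}).IsAssociatedPrime Q ∧ Q.comap C = P ∧
      P.height + 1 ≤ Q.height := by
  have hprime := hP.toIsPrime
  let L := Localization.AtPrime P
  let z : L := IsLocalization.mk' L H (⟨G, hG⟩ : P.primeCompl)
  have hz : algebraMap R L G * z = algebraMap R L H :=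
    IsLocalization.mk'_spec' L H (⟨G, hG⟩ : P.primeCompl)
  let φ : R[X] →+* L := (aeval z).toRingHom
  have hφ : φ (C G * X - C H) = 0 := by simp [φ, hz]
  have hφC : φ.comp C = algebraMap R L := (aeval z).comp_algebraMap
  have hQP : ((IsLocalRing.maximalIdeal L).comap φ).comap C = P := by
    rw [Ideal.comap_comap, hφC]
    exact IsLocalization.AtPrime.under_maximalIdeal L P
  refine ⟨(IsLocalRing.maximalIdeal L).comap φ, ?_, hQP, ?_⟩
  · refine isAssociatedPrime_sup_span_C_mul_X_sub_C (by rwa [hQP]) (fun h ↦ hG (hQP ▸ h)) ?_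
      fun s hs ↦ ?_
    · simp [hφ]
    · rw [hQP]
      exact (IsLocalization.algebraMap_mem_map_algebraMap_iff P.primeCompl L J s).mp
        (algebraMap_mem_map_of_C_mem hz hs)
  · have hinj : Function.Injective (PrimeSpectrum.comap φ) := by
      refine Function.Injective.of_comp (f := PrimeSpectrum.comap C) ?_
      rw [← PrimeSpectrum.comap_comp, hφC]
      exact PrimeSpectrum.localization_comap_injective L P.primeCompl
    have hker : RingHom.ker φ ≠ ⊥ := by
      refine (Submodule.ne_bot_iff _).mpr ⟨_, hφ, fun h ↦ hG ?_⟩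
      have hG0 : G = 0 := by simpa [coeff_C] using congr(($h).coeff 1)
      exact hG0 ▸ P.zero_mem
    calc P.height + 1 = (IsLocalRing.maximalIdeal L).height + 1 := by
          rw [← IsLocalization.height_under P.primeCompl (IsLocalRing.maximalIdeal L),
            IsLocalization.AtPrime.under_maximalIdeal L P]
      _ ≤ _ := height_add_one_le_height_comap hinj hker _

theorem isAssociatedPrime_span_insert_C_add_X_mul_C [IsNoetherianRing R] {ι : Type*} {c e : ι → R}
    {G H : R} {Q : Ideal R[X]} (hG : C G ∉ Q)
    (hQ : ((Ideal.span (Set.range fun i ↦ c i * G + e i * H)).map C ⊔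
      Ideal.span {C G * X - C H}).IsAssociatedPrime Q) :
    (Ideal.span (insert (C G * X - C H)
      (Set.range fun i ↦ C (c i) + X * C (e i)))).IsAssociatedPrime Q := by
  set K := Ideal.span (insert (C G * X - C H) (Set.range fun i ↦ C (c i) + X * C (e i)))
  have hGH : C G * X - C H ∈ K := Ideal.subset_span (Set.mem_insert _ _)
  refine isAssociatedPrime_of_locally_eq hQ (fun r hr ↦ ⟨1, Q.ne_top_iff_one.mp hQ.ne_top, ?_⟩)
    fun r hr ↦ ⟨C G, hG, ?_⟩
  · rw [one_mul]
    revert r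
    refine sup_le ?_ ((Ideal.span_singleton_le_iff_mem _).mpr hGH)
    rw [Ideal.map_span, Ideal.span_le]
    rintro _ ⟨_, ⟨i, rfl⟩, rfl⟩
    rw [SetLike.mem_coe]
    have hi : C (c i) + X * C (e i) ∈ K := Ideal.subset_span (Set.mem_insert_of_mem _ ⟨i, rfl⟩)
    convert K.sub_mem (K.mul_mem_left (C G) hi) (K.mul_mem_left (C (e i)) hGH) using 1
    simp only [map_add, map_mul]
    ring
  · rw [mul_comm (C G) r]
    suffices K ≤ Submodule.colon _ {C G} from Submodule.mem_colon_singleton.mp (this hr)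
    refine Ideal.span_le.mpr (Set.insert_subset ?_ ?_)
    · exact Submodule.mem_colon_singleton.mpr (Ideal.mul_mem_right _ _
        (Ideal.mem_sup_right (Ideal.mem_span_singleton_self _)))
    · rintro _ ⟨i, rfl⟩
      have hi : C (c i * G + e i * H) ∈ (Ideal.span (Set.range fun i ↦ c i * G + e i * H)).map C :=
        Ideal.mem_map_of_mem C (Ideal.subset_span ⟨i, rfl⟩)
      refine Submodule.mem_colon_singleton.mpr ?_
      convert Ideal.add_mem _ (Ideal.mem_sup_left hi) (Ideal.mul_mem_left _ (C (e i))
        (Ideal.mem_sup_right (Ideal.mem_span_singleton_self (C G * X - C H)))) using 1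
      simp only [map_add, map_mul, smul_eq_mul]
      ring

end Slope

section LinearIdealHeight

open MvPolynomial Polynomial

variable {σ k ι : Type*} [Finite σ] [Field k] [Fintype ι]

/-- The polynomial ring over `k[u]`, as the ring of polynomials in `u` over the polynomial ring. -/
noncomputable def polynomialCoeffEquiv (σ k : Type*) [CommRing k] :
    MvPolynomial σ k[X] ≃+* (MvPolynomial σ k)[X] :=
  ((optionEquivRight k σ).symm.trans (optionEquivLeft k σ)).toRingEquiv

theorem polynomialCoeffEquiv_C_X (σ k : Type*) [CommRing k] :
    polynomialCoeffEquiv σ k (MvPolynomial.C Polynomial.X) = Polynomial.X := by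
  rw [← optionEquivRight_X_none]
  simp [polynomialCoeffEquiv]

theorem polynomialCoeffEquiv_map_C {σ k : Type*} [CommRing k] (p : MvPolynomial σ k) :
    polynomialCoeffEquiv σ k (map Polynomial.C p) = Polynomial.C p := by
  suffices (polynomialCoeffEquiv σ k : _ →+* _).comp (map Polynomial.C) = Polynomial.C from
    RingHom.congr_fun this p
  refine MvPolynomial.ringHom_ext (fun r ↦ ?_) fun i ↦ ?_
  · simp [polynomialCoeffEquiv]
  · simp [polynomialCoeffEquiv]

/-- With `u = H / G`, the generators become the linear forms `c i + u * e i` over `k[u]`, to which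
`G * u - H` has to be added. -/
theorem height_le_card_of_isAssociatedPrime_span_mul_add_mul {c e : ι → MvPolynomial σ k}
    {G H : MvPolynomial σ k} (hc : ∀ i, (c i).IsHomogeneous 1) (he : ∀ i, (e i).IsHomogeneous 1)
    (hG : G.IsHomogeneous 1) (hH : H.IsHomogeneous 1) {P : Ideal (MvPolynomial σ k)}
    (hP : (Ideal.span (Set.range fun i ↦ c i * G + e i * H)).IsAssociatedPrime P) (hGP : G ∉ P) :
    P.height ≤ Fintype.card ι := by
  obtain ⟨Q, hQ, hQP, hheight⟩ := exists_isAssociatedPrime_sup_span_C_mul_X_sub_C hP hGP H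
  let u : MvPolynomial σ k[X] := C Polynomial.X
  let l : Option ι → MvPolynomial σ k[X] := fun o ↦ o.elim
    (u * map Polynomial.C G - map Polynomial.C H)
    fun i ↦ map Polynomial.C (c i) + u * map Polynomial.C (e i)
  have hl (o) : (l o).IsHomogeneous 1 := by
    cases o with
    | none => exact ((hG.map _).C_mul _).sub (hH.map _)
    | some i => exact ((hc i).map _).add (((he i).map _).C_mul _)
  have hmap : (Ideal.span (Set.range l)).map (polynomialCoeffEquiv σ k) =
      Ideal.span (insert (Polynomial.C G * Polynomial.X - Polynomial.C H)
        (Set.range fun i ↦ Polynomial.C (c i) + Polynomial.X * Polynomial.C (e i))) := by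
    rw [Ideal.map_span, Option.range_eq, Set.image_insert_eq, ← Set.range_comp]
    simp [Function.comp_def, l, u, polynomialCoeffEquiv_C_X, polynomialCoeffEquiv_map_C,
      mul_comm Polynomial.X (Polynomial.C G)]
  have hQ' := isAssociatedPrime_comap_of_map (polynomialCoeffEquiv σ k)
    (hmap ▸ isAssociatedPrime_span_insert_C_add_X_mul_C (fun h ↦ hGP (hQP ▸ h)) hQ)
  have hle := height_le_card_of_isAssociatedPrime_span_linear hl hQ'
  rw [RingEquiv.height_comap, Fintype.card_option, Nat.cast_add, Nat.cast_one] at hle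
  exact (ENat.add_le_add_iff_right ENat.one_ne_top).mp (hheight.trans hle)

end LinearIdealHeight

section Colon

variable {R : Type*} [CommRing R] {J P : Ideal R}

theorem isAssociatedPrime_colon_or_sup_span [IsNoetherianRing R] (hP : J.IsAssociatedPrime P)
    (y : R) :
    (J.colon {y}).IsAssociatedPrime P ∨ (J ⊔ Ideal.span {y}).IsAssociatedPrime P := by
  simp only [Submodule.isAssociatedPrime_iff] at hP ⊢
  obtain ⟨hprime, f, hf⟩ := hP
  have mem_iff (r : R) : r ∈ P ↔ r * f ∈ J := by
    rw [hf, Submodule.mem_colon_singleton, smul_eq_mul]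
  by_cases h : ∃ s ∉ P, s * f ∈ J ⊔ Ideal.span {y}
  · obtain ⟨s, hs, hsf⟩ := h
    obtain ⟨z, w, hw, hz⟩ := Ideal.mem_span_singleton_sup.mp (sup_comm J _ ▸ hsf)
    refine .inl ⟨hprime, z, ?_⟩
    ext r
    have key : s * r * f = y * r * z + r * w := by linear_combination -r * hz
    rw [Submodule.mem_colon_singleton, Submodule.mem_colon_singleton, smul_eq_mul, smul_eq_mul,
      ← hprime.mul_mem_left_iff hs, mem_iff, key, J.add_mem_iff_left (J.mul_mem_left r hw),
      mul_rotate]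
  · push Not at h
    refine .inr ⟨hprime, f, ?_⟩
    ext r
    rw [Submodule.mem_colon_singleton, smul_eq_mul]
    exact ⟨fun hr ↦ Ideal.mem_sup_left ((mem_iff r).mp hr), fun hr ↦ by_contra fun h' ↦ h r h' hr⟩

variable {ι : Type*} {a b : ι → R} {x y : R} {j : ι}

/-- The ideal containing `w` is generated by `a j * x + b j * y` and the minors
`b i * a j - a i * b j`; the updates at `j` give all of these the shape `c i * a j + e i * b j`. -/
theorem exists_mul_eq_add_of_mem_span_mul_add_mul [DecidableEq ι] {z : R}
    (hz : z ∈ Ideal.span (Set.range fun i ↦ a i * x + b i * y)) (j : ι) :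
    ∃ s, ∃ w ∈ Ideal.span (Set.range fun i ↦
      Function.update b j x i * a j + Function.update (-a) j y i * b j),
      a j * z = s * (a j * x + b j * y) + y * w := by
  set K := Ideal.span (Set.range fun i ↦
      Function.update b j x i * a j + Function.update (-a) j y i * b j)
  induction hz using Submodule.span_induction with
  | mem z hz =>
    obtain ⟨i, rfl⟩ := hz
    refine ⟨a i, b i * a j - a i * b j, ?_, by ring⟩
    rcases eq_or_ne i j with rfl | hij
    · rw [mul_comm, sub_self]
      exact K.zero_mem
    · refine Ideal.subset_span ⟨i, ?_⟩
      simp [hij, sub_eq_add_neg]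
  | zero => exact ⟨0, 0, K.zero_mem, by simp⟩
  | add z z' _ _ h h' =>
    obtain ⟨s, w, hw, h⟩ := h
    obtain ⟨s', w', hw', h'⟩ := h'
    exact ⟨s + s', w + w', K.add_mem hw hw', by linear_combination h + h'⟩
  | smul r z _ h =>
    obtain ⟨s, w, hw, h⟩ := h
    exact ⟨r * s, r * w, K.mul_mem_left r hw, by simp only [smul_eq_mul]; linear_combination r * h⟩

theorem isAssociatedPrime_span_mul_add_mul_of_colon [IsNoetherianRing R] [IsDomain R]
    [DecidableEq ι] (hy : Prime y) (hyx : ¬ y ∣ x) (hya : ¬ y ∣ a j) (ha : a j ∉ P)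
    (hP : ((Ideal.span (Set.range fun i ↦ a i * x + b i * y)).colon {y}).IsAssociatedPrime P) :
    (Ideal.span (Set.range fun i ↦
      Function.update b j x i * a j + Function.update (-a) j y i * b j)).IsAssociatedPrime P := by
  set J := Ideal.span (Set.range fun i ↦ a i * x + b i * y)
  set K := Ideal.span (Set.range fun i ↦
    Function.update b j x i * a j + Function.update (-a) j y i * b j)
  have gen_mem (i : ι) : a i * x + b i * y ∈ J := Ideal.subset_span ⟨i, rfl⟩
  refine isAssociatedPrime_of_locally_eq hP (fun r hr ↦ ⟨a j, ha, ?_⟩) fun r hr ↦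
    ⟨1, P.ne_top_iff_one.mp hP.ne_top, ?_⟩
  · obtain ⟨s, w, hw, h⟩ := exists_mul_eq_add_of_mem_span_mul_add_mul
      (Submodule.mem_colon_singleton.mp hr) j
    have hdvd : y ∣ s * (a j * x) := by
      refine ⟨a j * r - s * b j - w, ?_⟩
      rw [smul_eq_mul] at h
      linear_combination -h
    obtain ⟨s, rfl⟩ := (hy.dvd_or_dvd hdvd).resolve_right (hy.not_dvd_mul hya hyx)
    have hr : a j * r = s * (a j * x + b j * y) + w := by
      apply mul_left_cancel₀ hy.ne_zero
      rw [smul_eq_mul] at h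
      linear_combination h
    have hj : a j * x + b j * y ∈ K := by
      refine Ideal.subset_span ⟨j, ?_⟩
      simp only [Function.update_self]
      ring
    exact hr ▸ K.add_mem (K.mul_mem_left s hj) hw
  · rw [one_mul]
    suffices K ≤ J.colon {y} from this hr
    rw [Ideal.span_le]
    rintro _ ⟨i, rfl⟩
    refine Submodule.mem_colon_singleton.mpr ?_
    rcases eq_or_ne i j with rfl | hij
    · convert J.mul_mem_left y (gen_mem i) using 1
      simp only [Function.update_self, smul_eq_mul]
      ring
    · convert J.sub_mem (J.mul_mem_left (a j) (gen_mem i))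
        (J.mul_mem_left (a i) (gen_mem j)) using 1
      simp only [Function.update_of_ne hij, Pi.neg_apply, smul_eq_mul]
      ring

theorem isAssociatedPrime_span_pair_of_sup [IsNoetherianRing R] (ha : a j ∉ P)
    (hP : (Ideal.span (Set.range fun i ↦ a i * x + b i * y) ⊔
      Ideal.span {y}).IsAssociatedPrime P) : (Ideal.span {x, y}).IsAssociatedPrime P := by
  set K := Ideal.span (Set.range fun i ↦ a i * x + b i * y) ⊔ Ideal.span {y}
  have hy : y ∈ K := Ideal.mem_sup_right (Ideal.mem_span_singleton_self y)
  have hj : a j * x + b j * y ∈ K := Ideal.mem_sup_left (Ideal.subset_span ⟨j, rfl⟩)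
  refine isAssociatedPrime_of_locally_eq hP (fun r hr ↦ ⟨1, P.ne_top_iff_one.mp hP.ne_top, ?_⟩)
    fun r hr ↦ ⟨a j, ha, ?_⟩
  · rw [one_mul]
    revert r
    refine sup_le (Ideal.span_le.mpr ?_) (Ideal.span_mono (Set.subset_insert x {y}))
    rintro _ ⟨i, rfl⟩
    exact Ideal.mem_span_pair.mpr ⟨a i, b i, rfl⟩
  · obtain ⟨s, t, rfl⟩ := Ideal.mem_span_pair.mp hr
    convert K.add_mem (K.mul_mem_left s hj) (K.mul_mem_left (a j * t - s * b j) hy) using 1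
    ring

end Colon

section LinearForms

open MvPolynomial

variable {σ k ι : Type*} [Field k] {x y : MvPolynomial σ k}

theorem irreducible_of_isHomogeneous_one (hx : x.IsHomogeneous 1) (hx0 : x ≠ 0) :
    Irreducible x := by
  refine irreducible_of_totalDegree_eq_one (hx.totalDegree hx0) fun r hr ↦ isUnit_iff_ne_zero.mpr ?_
  rintro rfl
  exact hx0 (ext _ _ fun i ↦ by simpa using hr i)

theorem not_dvd_of_linearIndependent (hx : x.IsHomogeneous 1) (hy : y.IsHomogeneous 1)
    (hxy : LinearIndependent k ![x, y]) : ¬ y ∣ x := by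
  intro hdvd
  have hirr := irreducible_of_isHomogeneous_one hx (hxy.ne_zero 0)
  obtain ⟨u, hu⟩ := hdvd
  have hunit := (hirr.isUnit_or_isUnit hu).resolve_left
    (irreducible_of_isHomogeneous_one hy (hxy.ne_zero 1)).not_isUnit
  obtain ⟨c, -, rfl⟩ := isUnit_iff_eq_C_of_isReduced.mp hunit
  have := LinearIndependent.pair_iff.mp hxy 1 (-c) (by rw [hu]; simp [smul_eq_C_mul, mul_comm])
  exact one_ne_zero this.1

variable [Finite σ] [Fintype ι] {P : Ideal (MvPolynomial σ k)} {a b : ι → MvPolynomial σ k}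

theorem height_le_card_of_isAssociatedPrime_span_mul_add_mul_of_mem (hx : x.IsHomogeneous 1)
    (hy : y.IsHomogeneous 1) (hxy : LinearIndependent k ![x, y]) (ha : ∀ i, (a i).IsHomogeneous 1)
    (hb : ∀ i, (b i).IsHomogeneous 1)
    (hP : (Ideal.span (Set.range fun i ↦ a i * x + b i * y)).IsAssociatedPrime P) (hyP : y ∈ P)
    {j : ι} (haP : a j ∉ P) : P.height ≤ Fintype.card ι := by
  classical
  rcases subsingleton_or_nontrivial ι with _ | _
  · have hJ : (fun i ↦ a i * x + b i * y) = fun _ ↦ x * a j + y * b j := by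
      ext1 i
      rw [Subsingleton.elim i j]
      ring
    exact height_le_card_of_isAssociatedPrime_span_mul_add_mul (fun _ ↦ hx) (fun _ ↦ hy) (ha j)
      (hb j) (hJ ▸ hP) haP
  rcases isAssociatedPrime_colon_or_sup_span hP y with hP | hP
  · have hprime : Prime y := (irreducible_of_isHomogeneous_one hy (hxy.ne_zero 1)).prime
    refine height_le_card_of_isAssociatedPrime_span_mul_add_mul (fun i ↦ ?_) (fun i ↦ ?_) (ha j)
      (hb j) (isAssociatedPrime_span_mul_add_mul_of_colon hprime
        (not_dvd_of_linearIndependent hx hy hxy)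
        (fun h ↦ haP (P.mem_of_dvd h hyP)) haP hP) haP
    · rcases eq_or_ne i j with rfl | hij
      · simpa using hx
      · simpa [hij] using hb i
    · rcases eq_or_ne i j with rfl | hij
      · simpa using hy
      · simpa [hij] using (ha i).neg
  · have hP := isAssociatedPrime_span_pair_of_sup haP hP
    rw [← Matrix.range_cons_cons_empty _ _ ![]] at hP
    have hlin (i : Fin 2) : (![x, y] i).IsHomogeneous 1 := by fin_cases i; exacts [hx, hy]
    calc P.height ≤ Fintype.card (Fin 2) := height_le_card_of_isAssociatedPrime_span_linear hlin hP
      _ ≤ Fintype.card ι := mod_cast Fintype.one_lt_card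

end LinearForms

section LinearSubalgebra

open MvPolynomial Module

variable {σ k : Type*} [Field k]

theorem eq_idealOfVars_of_le {P : Ideal (MvPolynomial σ k)} (hP : P ≠ ⊤)
    (h : idealOfVars σ k ≤ P) : P = idealOfVars σ k := by
  refine le_antisymm (fun f hf ↦ ?_) h
  have hsub : f - C (constantCoeff f) ∈ idealOfVars σ k := by
    rw [← pow_one (idealOfVars σ k), mem_pow_idealOfVars_iff']
    intro i hi
    obtain rfl : i = 0 := i.degree_eq_zero_iff.mp (Nat.lt_one_iff.mp hi)
    simp [constantCoeff_eq]
  have hC : C (constantCoeff f) ∈ P := by simpa using P.sub_mem hf (h hsub)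
  have hzero : constantCoeff f = 0 := by
    by_contra h0
    exact hP (P.eq_top_of_isUnit_mem hC ((isUnit_iff_ne_zero.mpr h0).map C))
  simpa [hzero] using hsub

theorem basis_sumExtend_inl {ι K V : Type*} [DivisionRing K] [AddCommGroup V] [Module K V]
    {v : ι → V} (hv : LinearIndependent K v) (i : ι) : Basis.sumExtend hv (.inl i) = v i := by
  simp only [Basis.sumExtend, Equiv.trans_def, Basis.coe_reindex, Basis.coe_extend,
    Function.comp_apply]
  rfl

variable [Finite σ] {P : Ideal (MvPolynomial σ k)} {b s T : Set (MvPolynomial σ k)}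

theorem exists_algEquiv_C_eq_aeval (hb : ∀ l ∈ b, l.IsHomogeneous 1)
    (hli : LinearIndependent k ((↑) : b → MvPolynomial σ k)) :
    ∃ (κ : Set (homogeneousSubmodule σ k 1))
      (e : MvPolynomial κ (MvPolynomial b k) ≃+* MvPolynomial σ k),
      Finite b ∧ Finite κ ∧ ∀ f, e (C f) = aeval (↑) f := by
  let b' : b → homogeneousSubmodule σ k 1 := fun l ↦ ⟨l, hb l l.2⟩
  have hli' : LinearIndependent k b' := .of_comp (homogeneousSubmodule σ k 1).subtype hli
  have := Module.Finite.of_basis (basisX σ k)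
  have := Module.Finite.finite_basis (Basis.sumExtend hli')
  let e := (sumAlgEquiv k _ b).symm.trans ((renameEquiv k (Equiv.sumComm _ b)).trans
    (coordinateChange (Basis.sumExtend hli')))
  have hC : e.toAlgHom.comp (IsScalarTower.toAlgHom k _ _) =
      aeval ((↑) : b → MvPolynomial σ k) := by
    ext l : 1
    simp [e, basis_sumExtend_inl, b']
  exact ⟨_, e.toRingEquiv, .sum_left (Basis.sumExtendIndex hli'), .sum_right b,
    DFunLike.congr_fun hC⟩

theorem eq_span_of_isAssociatedPrime_span_of_linearIndependent (hb : ∀ l ∈ b, l.IsHomogeneous 1)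
    (hli : LinearIndependent k ((↑) : b → MvPolynomial σ k)) (hT : T ⊆ Algebra.adjoin k b)
    (hP : (Ideal.span T).IsAssociatedPrime P) (hbP : b ⊆ P) : P = Ideal.span b := by
  obtain ⟨κ, e, _, _, he⟩ := exists_algEquiv_C_eq_aeval hb hli
  have hspan : Ideal.span T =
      ((Ideal.span (aeval (R := k) ((↑) : b → MvPolynomial σ k) ⁻¹' T)).map C).map e := by
    have hrange : T ⊆ Set.range (aeval (R := k) ((↑) : b → MvPolynomial σ k)) := by
      rwa [← AlgHom.coe_range, ← Algebra.adjoin_range_eq_range_aeval, Subtype.range_coe]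
    simp only [Ideal.map_span, Set.image_image, he, Set.image_preimage_eq_of_subset hrange]
  have hP' := isAssociatedPrime_comap_of_map _ (hspan ▸ hP)
  have hvars : (P.comap e).comap C = idealOfVars b k := by
    refine eq_idealOfVars_of_le (hP'.1.comap C).ne_top (Ideal.span_le.mpr ?_)
    rintro _ ⟨l, rfl⟩
    simpa [he] using hbP l.2
  have hmap := eq_map_comap_C_of_isAssociatedPrime_map_C hP'
  rw [hvars] at hmap
  rw [← Ideal.map_comap_of_surjective e e.surjective P, hmap, idealOfVars,
    Ideal.map_span, Ideal.map_span, ← Set.range_comp, ← Set.range_comp]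
  simp [Function.comp_def, he]

theorem eq_span_of_isAssociatedPrime_span_of_subset_adjoin (hs : ∀ l ∈ s, l.IsHomogeneous 1)
    (hT : T ⊆ Algebra.adjoin k s) (hP : (Ideal.span T).IsAssociatedPrime P) (hsP : s ⊆ P) :
    P = Ideal.span s := by
  obtain ⟨b, hbs, hspan, hli⟩ := exists_linearIndependent k s
  rw [← Algebra.adjoin_span, ← hspan, Algebra.adjoin_span] at hT
  rw [← ideal_span_eq_of_span_eq hspan]
  exact eq_span_of_isAssociatedPrime_span_of_linearIndependent (fun l hl ↦ hs l (hbs hl)) hli hT hP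
    (hbs.trans hsP)

end LinearSubalgebra

theorem heightENat_le_height_of_isPrime {R : Type u} [CommRing R] {P : Ideal R} (hP : P.IsPrime) :
    P.heightENat ≤ P.height :=
  (iInf₂_le (⟨P, hP⟩ : PrimeSpectrum R) le_rfl).trans_eq
    (PrimeSpectrum.height_eq_orderHeight _).symm

/-- Let `x, y` be linearly independent linear forms and
`J = (q_1, …, q_t)` an ideal generated by quadrics with `J ⊆ (x, y)`, where
`q_i = a_i x + b_i y` with `a_i, b_i` linear forms. Set
`m = (x, y, a_1, …, a_t, b_1, …, b_t)`. Then every associated prime `p ≠ m` of `S/J`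
satisfies `height p ≤ t`. -/
theorem height_le_of_assoc_prime_of_quadrics_in_linear_prime
    (k : Type u) [Field k] (N : ℕ) (t : ℕ)
    (x y : MvPolynomial (Fin N) k)
    (hx : x.IsHomogeneous 1) (hy : y.IsHomogeneous 1)
    (hxy : LinearIndependent k ![x, y])
    (q a b : Fin t → MvPolynomial (Fin N) k)
    (hq2 : ∀ i, (q i).IsHomogeneous 2)
    (ha : ∀ i, (a i).IsHomogeneous 1) (hb : ∀ i, (b i).IsHomogeneous 1)
    (hqab : ∀ i, q i = a i * x + b i * y)
    (J : Ideal (MvPolynomial (Fin N) k))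
    (hJ : J = Ideal.span (Set.range q))
    (hJxy : J ≤ Ideal.span {x, y})
    (m : Ideal (MvPolynomial (Fin N) k))
    (hm : m = Ideal.span ({x, y} ∪ Set.range a ∪ Set.range b))
    (p : Ideal (MvPolynomial (Fin N) k))
    (hp : IsAssociatedPrime p (MvPolynomial (Fin N) k ⧸ J))
    (hpm : p ≠ m) :
    p.heightENat ≤ t := by
  obtain rfl : q = fun i ↦ a i * x + b i * y := funext hqab
  subst hJ hm
  have hpJ := isAssociatedPrime_quotient_iff.mp hp
  have hpJ' : (Ideal.span (Set.range fun i ↦ b i * y + a i * x)).IsAssociatedPrime p := by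
    simpa only [add_comm] using hpJ
  suffices h : p.height ≤ Fintype.card (Fin t) by
    simpa using (heightENat_le_height_of_isPrime hpJ.1).trans h
  by_contra hlt
  have hxp : x ∈ p := by_contra fun h ↦
    hlt (height_le_card_of_isAssociatedPrime_span_mul_add_mul ha hb hx hy hpJ h)
  have hyp : y ∈ p := by_contra fun h ↦
    hlt (height_le_card_of_isAssociatedPrime_span_mul_add_mul hb ha hy hx hpJ' h)
  have hap (j) : a j ∈ p := by_contra fun h ↦
    hlt (height_le_card_of_isAssociatedPrime_span_mul_add_mul_of_mem hx hy hxy ha hb hpJ hyp h)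
  have hbp (j) : b j ∈ p := by_contra fun h ↦ hlt
    (height_le_card_of_isAssociatedPrime_span_mul_add_mul_of_mem hy hx
      (LinearIndependent.pair_symm_iff.mp hxy) hb ha hpJ' hxp h)
  refine hpm (eq_span_of_isAssociatedPrime_span_of_subset_adjoin ?_ ?_ hpJ ?_)
  · rintro _ (((rfl | rfl) | ⟨i, rfl⟩) | ⟨i, rfl⟩)
    exacts [hx, hy, ha i, hb i]
  · rintro _ ⟨i, rfl⟩
    exact add_mem (mul_mem (Algebra.subset_adjoin (by simp)) (Algebra.subset_adjoin (by simp)))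
      (mul_mem (Algebra.subset_adjoin (by simp)) (Algebra.subset_adjoin (by simp)))
  · rintro _ (((rfl | rfl) | ⟨i, rfl⟩) | ⟨i, rfl⟩)
    exacts [hxp, hyp, hap i, hbp i]
end

section
/- Let k be an algebraically closed field, S a polynomial ring over k, and I ⊆ S a homogeneous ideal generated by n quadrics. If I has an associated prime p with height(p) = 3 and Hilbert–Samuel multiplicity e(S/p) = 1, then pd_S(S/I) ≤ 3n+1. -/
open CategoryTheory Opposite

universe u

/-!
The linear forms of `S/p` have a reduction spanned by algebraically independent elements `y`, and
`S/p` is a finite module over `k[y]`. If some linear form `t` were not in the span of `y`, then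
`k[y] ⊕ t k[y] ⊆ S/p`, since `k[y]` is integrally closed, and `S/p` would have multiplicity at
least two. So `p` is generated by `h` independent linear forms `u j`, where `h` is its height, and
the given quadrics are `∑ⱼ a i j * u j` with linear `a i j`.

If the `a i j` and the `u j` together span at most `h n + h - 2` dimensions, Hilbert's syzygy
theorem over the polynomial subring they generate, over which `S` is free, gives the bound.
Otherwise they satisfy at most one linear relation. Set aside one quadric `q` such that the
`a i j` of the others, together with the `u j`, are independent. The ideal `L` of the other quadrics
and the colon `L : q` are both extended from the polynomial subring on these `h n` forms, so `S/L`
and `S/(L : q)` have projective dimension at most `h n`, and `0 → S/(L : q) → S/L → S/(L + q) → 0`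
gives `h n + 1 ≤ h n + h - 2`.
-/

section ProjectiveDimension

open scoped TensorProduct

variable {R : Type u} [CommRing R] {A B M : Type u} [AddCommGroup A] [Module R A]
  [AddCommGroup B] [Module R B] [AddCommGroup M] [Module R M]

lemma subsingleton_ext_of_hasProjectiveDimensionLE (X Y : ModuleCat.{u} R) (n : ℕ)
    [HasProjectiveDimensionLE X n] :
    Subsingleton (((Ext R (ModuleCat.{u} R) (n + 1)).obj (op X)).obj Y) := by
  apply ModuleCat.subsingleton_of_isZero
  let P := projectiveResolution X
  refine Limits.IsZero.of_iso ?_ (P.isoExt (n + 1) Y)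
  rw [← HomologicalComplex.exactAt_iff_isZero_homology,
    HomologicalComplex.exactAt_iff' _ n (n + 1) (n + 2) (by simp) (by simp),
    ShortComplex.moduleCat_exact_iff]
  intro φ hφ
  change P.complex.X (n + 1) ⟶ Y at φ
  have hcocycle : P.complex.d (n + 2) (n + 1) ≫ φ = 0 := hφ
  have hclass : P.extMk φ (n + 2) rfl hcocycle = 0 :=
    Abelian.Ext.eq_zero_of_hasProjectiveDimensionLT _ (n + 1) le_rfl
  exact (P.extMk_eq_zero_iff φ (n + 2) rfl hcocycle n rfl).1 hclass

lemma projDim_le_of_hasProjectiveDimensionLE {n : ℕ}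
    (h : HasProjectiveDimensionLE (ModuleCat.of R M) n) : projDim R M ≤ (n : ℕ∞) := by
  refine sInf_le ⟨n, fun i hi Y => ?_, rfl⟩
  obtain ⟨j, rfl⟩ : ∃ j, i = j + 1 := ⟨i - 1, by omega⟩
  have : HasProjectiveDimensionLE (ModuleCat.of R M) j :=
    hasProjectiveDimensionLT_of_ge _ (n + 1) _ (by omega)
  exact subsingleton_ext_of_hasProjectiveDimensionLE _ _ _

lemma hasProjectiveDimensionLE_zero_iff :
    HasProjectiveDimensionLE (ModuleCat.of R M) 0 ↔ Module.Projective R M := by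
  rw [IsProjective.iff_projective, projective_iff_hasProjectiveDimensionLE_zero]

lemma hasProjectiveDimensionLE_mono {m n : ℕ} (hmn : m ≤ n)
    (h : HasProjectiveDimensionLE (ModuleCat.of R M) m) :
    HasProjectiveDimensionLE (ModuleCat.of R M) n :=
  hasProjectiveDimensionLT_of_ge _ (m + 1) _ (by omega)

lemma shortExact_of_exact {f : A →ₗ[R] B} {g : B →ₗ[R] M} (hf : Function.Injective f)
    (hg : Function.Surjective g) (hfg : Function.Exact f g) :
    (ShortComplex.mk (ModuleCat.ofHom f) (ModuleCat.ofHom g)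
      (by ext x; exact hfg.apply_apply_eq_zero x)).ShortExact where
  exact := (ShortComplex.ShortExact.moduleCat_exact_iff_function_exact _).2 hfg
  mono_f := (ModuleCat.mono_iff_injective _).2 hf
  epi_g := (ModuleCat.epi_iff_surjective _).2 hg

lemma hasProjectiveDimensionLE_of_exact {f : A →ₗ[R] B} {g : B →ₗ[R] M}
    (hf : Function.Injective f) (hg : Function.Surjective g) (hfg : Function.Exact f g) {n : ℕ}
    (hA : HasProjectiveDimensionLE (ModuleCat.of R A) n)
    (hB : HasProjectiveDimensionLE (ModuleCat.of R B) (n + 1)) :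
    HasProjectiveDimensionLE (ModuleCat.of R M) (n + 1) :=
  (shortExact_of_exact hf hg hfg).hasProjectiveDimensionLT_X₃ (n + 1) hA hB

lemma hasProjectiveDimensionLE_ker [Module.Projective R B] {g : B →ₗ[R] M}
    (hg : Function.Surjective g) {n : ℕ}
    (hM : HasProjectiveDimensionLE (ModuleCat.of R M) (n + 1)) :
    HasProjectiveDimensionLE (ModuleCat.of R (LinearMap.ker g)) n :=
  ((shortExact_of_exact (LinearMap.ker g).subtype_injective hg
    (LinearMap.exact_subtype_ker_map g)).hasProjectiveDimensionLT_X₃_iff n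
      ((IsProjective.iff_projective B).1 inferInstance)).1 hM

attribute [local instance] RingHomInvPair.of_ringEquiv in
lemma hasProjectiveDimensionLE_of_addEquiv {R' M' : Type u} [CommRing R'] [AddCommGroup M']
    [Module R' M'] (e : R ≃+* R') (φ : M ≃+ M') (hφ : ∀ r m, φ (r • m) = e r • φ m) {n : ℕ}
    (_ : HasProjectiveDimensionLE (ModuleCat.of R M) n) :
    HasProjectiveDimensionLE (ModuleCat.of R' M') n :=
  let φ' : M ≃ₛₗ[RingHomClass.toRingHom e] M' := { φ with map_smul' := hφ }
  ModuleCat.hasProjectiveDimensionLE_of_semiLinearEquiv (M := ModuleCat.of R M)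
    (N := ModuleCat.of R' M') e φ' n

lemma hasProjectiveDimensionLE_baseChange_of_ker (R' : Type u) [CommRing R'] [Algebra R R']
    [Module.Flat R R'] [Module.Projective R B] {g : B →ₗ[R] M} (hg : Function.Surjective g) {n : ℕ}
    (h : HasProjectiveDimensionLE (ModuleCat.of R' (R' ⊗[R] LinearMap.ker g)) n) :
    HasProjectiveDimensionLE (ModuleCat.of R' (R' ⊗[R] M)) (n + 1) := by
  have hB : HasProjectiveDimensionLE (ModuleCat.of R' (R' ⊗[R] B)) 0 :=
    hasProjectiveDimensionLE_zero_iff.2 inferInstance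
  have hker : Function.Exact (LinearMap.ker g).subtype g := LinearMap.exact_subtype_ker_map g
  have hexact := lTensor_exact R' hker hg
  exact hasProjectiveDimensionLE_of_exact (f := (LinearMap.ker g).subtype.baseChange R')
    (g := g.baseChange R')
    (Module.Flat.lTensor_preserves_injective_linearMap _ (LinearMap.ker g).subtype_injective)
    (LinearMap.lTensor_surjective R' hg) hexact h
    (hasProjectiveDimensionLE_mono n.succ.zero_le hB)

lemma hasProjectiveDimensionLE_baseChange (R' : Type u) [CommRing R'] [Algebra R R']
    [Module.Flat R R'] {n : ℕ} (h : HasProjectiveDimensionLE (ModuleCat.of R M) n) :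
    HasProjectiveDimensionLE (ModuleCat.of R' (R' ⊗[R] M)) n := by
  induction n generalizing M with
  | zero =>
    rw [hasProjectiveDimensionLE_zero_iff] at h ⊢
    infer_instance
  | succ n ih =>
    have hg := Finsupp.linearCombination_id_surjective R M
    exact hasProjectiveDimensionLE_baseChange_of_ker R' hg (ih (hasProjectiveDimensionLE_ker hg h))

lemma hasProjectiveDimensionLE_quotient_map (B : Type u) {A : Type u} [CommRing A] [CommRing B]
    [Algebra A B] [Module.Flat A B] (I : Ideal A) {n : ℕ}
    (h : HasProjectiveDimensionLE (ModuleCat.of A (A ⧸ I)) n) :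
    HasProjectiveDimensionLE (ModuleCat.of B (B ⧸ I.map (algebraMap A B))) n :=
  let e := (Algebra.TensorProduct.quotIdealMapEquivTensorQuot B I).symm
  hasProjectiveDimensionLE_of_addEquiv (RingEquiv.refl B) e.toAddEquiv
    (fun r x => map_smul e.toLinearEquiv r x) (hasProjectiveDimensionLE_baseChange B h)

lemma hasProjectiveDimensionLE_quotient_sup_span {L H : Ideal R} {q : R}
    (hH : ∀ g, q * g ∈ L ↔ g ∈ H) {n : ℕ}
    (hpdH : HasProjectiveDimensionLE (ModuleCat.of R (R ⧸ H)) n)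
    (hpdL : HasProjectiveDimensionLE (ModuleCat.of R (R ⧸ L)) n) :
    HasProjectiveDimensionLE (ModuleCat.of R (R ⧸ (L ⊔ Ideal.span {q}))) (n + 1) := by
  let f : (R ⧸ H) →ₗ[R] R ⧸ L := H.mapQ L (LinearMap.mulLeft R q) fun g hg => (hH g).2 hg
  let g : (R ⧸ L) →ₗ[R] R ⧸ (L ⊔ Ideal.span {q}) := Submodule.factor le_sup_left
  have hf : Function.Injective f := by
    refine LinearMap.ker_eq_bot.1 (LinearMap.ker_eq_bot'.2 fun x hx => ?_)
    obtain ⟨x, rfl⟩ := Submodule.mkQ_surjective H x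
    exact (Submodule.Quotient.mk_eq_zero H).2 ((hH x).1 ((Submodule.Quotient.mk_eq_zero L).1 hx))
  have hfg : Function.Exact f g := by
    intro y
    obtain ⟨y, rfl⟩ := Submodule.mkQ_surjective L y
    rw [Submodule.factor_mk, Submodule.mkQ_apply, Submodule.Quotient.mk_eq_zero, sup_comm,
      Ideal.mem_span_singleton_sup]
    constructor
    · rintro ⟨a, b, hb, rfl⟩
      exact ⟨H.mkQ a, (Submodule.Quotient.eq L).2 (by simpa [mul_comm] using hb)⟩
    · rintro ⟨x, hx⟩
      obtain ⟨a, rfl⟩ := Submodule.mkQ_surjective H x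
      exact ⟨a, y - a * q, by simpa [mul_comm] using (Submodule.Quotient.eq L).1 hx.symm, by ring⟩
  exact hasProjectiveDimensionLE_of_exact hf (Submodule.factor_surjective _) hfg hpdH
    (hasProjectiveDimensionLE_mono n.le_succ hpdL)

end ProjectiveDimension

section HilbertSyzygy

open scoped Polynomial TensorProduct
open PolynomialModule (single)

section

variable (R : Type*) [CommRing R] (M : Type*) [AddCommGroup M] [Module R M] [Module R[X] M]
  [IsScalarTower R R[X] M]

/-- The `R[X]`-linear evaluation map `M[X] → M`, `∑ Xⁱ mᵢ ↦ ∑ Xⁱ • mᵢ`, of an `R[X]`-module `M`. -/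
noncomputable def polynomialModuleToBase : PolynomialModule R M →ₗ[R[X]] M :=
  (LinearMap.id : M →ₗ[R] M).liftBaseChange R[X] ∘ₗ
    (PolynomialModule.polynomialTensorProductLEquivPolynomialModule R M).symm

/-- The `R[X]`-linear map `X ⊗ 1 - 1 ⊗ X : M[X] → M[X]`, whose cokernel is the `R[X]`-module `M`. -/
noncomputable def polynomialModuleDiff : PolynomialModule R M →ₗ[R[X]] PolynomialModule R M :=
  LinearMap.lsmul R[X] _ Polynomial.X -
    { PolynomialModule.map R (Algebra.lsmul R R M (Polynomial.X : R[X])) with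
      map_smul' := fun p q => by simpa using PolynomialModule.map_smul R _ p q }

variable {R M}

@[simp]
lemma polynomialModuleToBase_single (i : ℕ) (m : M) :
    polynomialModuleToBase R M (single R i m) = (Polynomial.X : R[X]) ^ i • m := by
  have h : (PolynomialModule.polynomialTensorProductLEquivPolynomialModule R M).symm
      (single R i m) = ((Polynomial.X : R[X]) ^ i) ⊗ₜ[R] m := by
    rw [LinearEquiv.symm_apply_eq]
    simp [PolynomialModule.polynomialTensorProductLEquivPolynomialModule,
      ← Polynomial.monomial_one_right_eq_X_pow, PolynomialModule.lsingle]
  simp [polynomialModuleToBase, h]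

@[simp]
lemma polynomialModuleDiff_single (i : ℕ) (m : M) :
    polynomialModuleDiff R M (single R i m) =
      single R (i + 1) m - single R i ((Polynomial.X : R[X]) • m) := by
  simp [polynomialModuleDiff, Polynomial.X, add_comm i]

lemma coeff_succ_polynomialModuleDiff (q : PolynomialModule R M) (i : ℕ) :
    (polynomialModuleDiff R M q).coeff (i + 1) =
      q.coeff i - (Polynomial.X : R[X]) • q.coeff (i + 1) := by
  induction q using PolynomialModule.induction_linear with
  | zero => simp
  | add p q hp hq => simp [hp, hq]; abel
  | single j m =>
    have hsub : ∀ p q : PolynomialModule R M, (p - q).coeff = p.coeff - q.coeff :=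
      map_sub (PolynomialModule.coeffAddEquiv (R := R))
    simp [hsub, Finsupp.single_apply]

lemma polynomialModuleDiff_injective : Function.Injective (polynomialModuleDiff R M) := by
  rw [injective_iff_map_eq_zero]
  intro q hq
  have hcoeff : ∀ i, q.coeff i = (Polynomial.X : R[X]) • q.coeff (i + 1) := fun i => by
    have := coeff_succ_polynomialModuleDiff q i
    rwa [hq, PolynomialModule.coeff_zero, Finsupp.zero_apply, eq_comm, sub_eq_zero] at this
  obtain ⟨d, hd⟩ : ∃ d, ∀ i, d ≤ i → q.coeff i = 0 :=
    ⟨q.coeff.support.sup id + 1, fun i hi => Finsupp.notMem_support_iff.1 fun h =>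
      absurd (Finset.le_sup (f := id) h) (by simp; omega)⟩
  have hzero : ∀ j i, d ≤ i + j → q.coeff i = 0 := by
    intro j
    induction j with
    | zero => exact hd
    | succ j ih => exact fun i hi => by rw [hcoeff, ih (i + 1) (by omega), smul_zero]
  apply PolynomialModule.coeff_injective
  ext i
  exact hzero d i (by omega)

lemma polynomialModuleToBase_surjective : Function.Surjective (polynomialModuleToBase R M) :=
  fun m => ⟨single R 0 m, by simp⟩

lemma sub_single_polynomialModuleToBase_mem_range (q : PolynomialModule R M) :
    q - single R 0 (polynomialModuleToBase R M q) ∈ LinearMap.range (polynomialModuleDiff R M) := by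
  induction q using PolynomialModule.induction_linear with
  | zero => simp
  | add p q hp hq =>
    convert add_mem hp hq using 1
    rw [map_add, PolynomialModule.single_add]
    abel
  | single i m =>
    induction i generalizing m with
    | zero => simp
    | succ i ih =>
      have hstep : polynomialModuleDiff R M (single R i m) ∈
        LinearMap.range (polynomialModuleDiff R M) := ⟨_, rfl⟩
      convert add_mem hstep (ih ((Polynomial.X : R[X]) • m)) using 1
      simp [pow_succ, mul_smul]

lemma polynomialModuleDiff_exact :
    Function.Exact (polynomialModuleDiff R M) (polynomialModuleToBase R M) := by
  refine fun q => ⟨fun hq => ?_, ?_⟩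
  · simpa [hq] using sub_single_polynomialModuleToBase_mem_range q
  · rintro ⟨q, rfl⟩
    induction q using PolynomialModule.induction_linear with
    | zero => simp
    | add p q hp hq => rw [map_add, map_add, hp, hq, add_zero]
    | single i m => simp [pow_succ, mul_smul]

end

lemma hasProjectiveDimensionLE_polynomial {R : Type u} [CommRing R] {M : Type u} [AddCommGroup M]
    [Module R M] [Module R[X] M] [IsScalarTower R R[X] M] {n : ℕ}
    (h : HasProjectiveDimensionLE (ModuleCat.of R M) n) :
    HasProjectiveDimensionLE (ModuleCat.of R[X] M) (n + 1) := by
  have hM : HasProjectiveDimensionLE (ModuleCat.of R[X] (PolynomialModule R M)) n :=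
    hasProjectiveDimensionLE_of_addEquiv (RingEquiv.refl R[X])
      (PolynomialModule.polynomialTensorProductLEquivPolynomialModule R M).toAddEquiv
      (fun p x => map_smul
        (PolynomialModule.polynomialTensorProductLEquivPolynomialModule R M) p x)
      (hasProjectiveDimensionLE_baseChange R[X] h)
  exact hasProjectiveDimensionLE_of_exact polynomialModuleDiff_injective
    polynomialModuleToBase_surjective polynomialModuleDiff_exact hM
    (hasProjectiveDimensionLE_mono n.le_succ hM)

/-- `R` has global dimension at most `n`: every `R`-module has projective dimension at most `n`. -/
def GlobalDimensionLE (R : Type u) [CommRing R] (n : ℕ) : Prop :=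
  ∀ (M : Type u) [AddCommGroup M] [Module R M], HasProjectiveDimensionLE (ModuleCat.of R M) n

lemma GlobalDimensionLE.of_ringEquiv {R R' : Type u} [CommRing R] [CommRing R'] {n : ℕ}
    (h : GlobalDimensionLE R n) (e : R ≃+* R') : GlobalDimensionLE R' n := by
  intro M _ _
  let : Module R M := Module.compHom M (e : R →+* R')
  exact hasProjectiveDimensionLE_of_addEquiv e (AddEquiv.refl M) (fun _ _ => rfl) (h M)

lemma GlobalDimensionLE.polynomial {R : Type u} [CommRing R] {n : ℕ}
    (h : GlobalDimensionLE R n) : GlobalDimensionLE R[X] (n + 1) := by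
  intro M _ _
  let : Module R M := Module.compHom M (Polynomial.C : R →+* R[X])
  have : IsScalarTower R R[X] M := .of_algebraMap_smul fun _ _ => rfl
  exact hasProjectiveDimensionLE_polynomial (h M)

lemma GlobalDimensionLE.of_field (k : Type u) [Field k] : GlobalDimensionLE k 0 :=
  fun _ _ _ => hasProjectiveDimensionLE_zero_iff.2 inferInstance

theorem GlobalDimensionLE.mvPolynomial {R : Type u} [CommRing R] {n : ℕ}
    (hR : GlobalDimensionLE R n) (σ : Type) [Finite σ] :
    GlobalDimensionLE (MvPolynomial σ R) (n + Nat.card σ) := by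
  induction σ using Finite.induction_empty_option with
  | of_equiv e h =>
    rw [← Nat.card_congr e]
    exact h.of_ringEquiv (MvPolynomial.renameEquiv R e).toRingEquiv
  | h_empty => simpa using hR.of_ringEquiv (MvPolynomial.isEmptyRingEquiv R PEmpty).symm
  | h_option h =>
    rw [Finite.card_option, ← add_assoc]
    exact h.polynomial.of_ringEquiv (MvPolynomial.optionEquivLeft R _).symm.toRingEquiv

end HilbertSyzygy

section Translation

open scoped Polynomial

-- `τ (q * g) ∈ L[X]` puts every `q * gᵢ₊₁ + x * gᵢ` in `L`, where `τ g = ∑ gᵢ Xⁱ`; descend from the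
-- top coefficient to `g₀ = g`.
lemma mul_mem_of_translation {T : Type*} [CommRing T] {L : Ideal T} {q x g : T} (τ : T →+* T[X])
    (hτ : ∀ f, (τ f).coeff 0 = f) (hL : ∀ f ∈ L, τ f ∈ L.map Polynomial.C)
    (hq : τ q = Polynomial.C q + Polynomial.C x * Polynomial.X)
    (hcolon : ∀ h, x * h ∈ L → q * h ∈ L) (hg : q * g ∈ L) : x * g ∈ L := by
  have hcoeff : ∀ i, q * (τ g).coeff (i + 1) + x * (τ g).coeff i ∈ L := fun i => by
    have h := Ideal.mem_map_C_iff.1 (hL _ hg) (i + 1)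
    rwa [map_mul, hq, add_mul, Polynomial.coeff_add, Polynomial.coeff_C_mul, mul_assoc,
      Polynomial.coeff_C_mul, Polynomial.coeff_X_mul] at h
  have hdesc : ∀ j i, (τ g).natDegree < i + j → x * (τ g).coeff i ∈ L := by
    intro j
    induction j with
    | zero =>
      intro i hi
      rw [Polynomial.coeff_eq_zero_of_natDegree_lt (n := i) hi, mul_zero]
      exact L.zero_mem
    | succ j ih =>
      exact fun i hi =>
        (Ideal.add_mem_iff_right L (hcolon _ (ih (i + 1) (by omega)))).1 (hcoeff i)
  simpa [hτ] using hdesc ((τ g).natDegree + 1) 0 (by omega)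

open MvPolynomial

variable {k σ : Type*} [CommRing k]

/-- The translation `f(x) ↦ f(x + t w)` along `w`, where `t` is the polynomial variable of the
target. -/
noncomputable def lineTranslate (w : σ → k) : MvPolynomial σ k →ₐ[k] (MvPolynomial σ k)[X] :=
  aeval fun i => Polynomial.C (X i) + Polynomial.C (C (w i)) * Polynomial.X

lemma lineTranslate_C (w : σ → k) (c : k) : lineTranslate w (C c) = Polynomial.C (C c) :=
  (lineTranslate w).commutes c

lemma coeff_zero_lineTranslate (w : σ → k) (f : MvPolynomial σ k) :
    (lineTranslate w f).coeff 0 = f := by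
  have h : Polynomial.constantCoeff.comp (lineTranslate w : MvPolynomial σ k →+* _) = .id _ :=
    ringHom_ext (fun a => by simp [Polynomial.algebraMap_apply])
      (fun i => by simp [lineTranslate])
  exact RingHom.congr_fun h f

lemma lineTranslate_of_isHomogeneous_one {w : σ → k} {f : MvPolynomial σ k}
    (hf : f.IsHomogeneous 1) :
    lineTranslate w f =
      Polynomial.C f + Polynomial.C (C (eval w f)) * Polynomial.X := by
  rw [← mem_homogeneousSubmodule, homogeneousSubmodule_one_eq_span_X] at hf
  induction hf using Submodule.span_induction with
  | mem f h => obtain ⟨i, rfl⟩ := h; simp [lineTranslate]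
  | zero => simp
  | add f g _ _ hf hg => simp only [map_add, hf, hg]; ring
  | smul c f _ hf =>
    simp only [smul_eq_C_mul, map_mul, eval_C, hf, lineTranslate_C]
    ring

lemma lineTranslate_sum_mul {J : Type*} [Fintype J] {w : σ → k} {a u : J → MvPolynomial σ k}
    (ha : ∀ j, (a j).IsHomogeneous 1) (hu : ∀ j, (u j).IsHomogeneous 1)
    (hw : ∀ j, eval w (u j) = 0) :
    lineTranslate w (∑ j, a j * u j) = Polynomial.C (∑ j, a j * u j) +
      Polynomial.C (∑ j, C (eval w (a j)) * u j) * Polynomial.X := by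
  simp only [map_sum, map_mul, lineTranslate_of_isHomogeneous_one (ha _),
    lineTranslate_of_isHomogeneous_one (hu _), hw, Finset.sum_mul, ← Finset.sum_add_distrib]
  exact Finset.sum_congr rfl fun j _ => by simp only [map_zero]; ring

lemma lineTranslate_mem_map_C {w : σ → k} {L : Ideal (MvPolynomial σ k)}
    {s : Set (MvPolynomial σ k)} (hL : L = Ideal.span s)
    (hs : ∀ g ∈ s, lineTranslate w g = Polynomial.C g) {f : MvPolynomial σ k} (hf : f ∈ L) :
    lineTranslate w f ∈ L.map Polynomial.C := by
  have hle : L ≤ (L.map Polynomial.C).comap (lineTranslate w) :=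
    hL ▸ Ideal.span_le.2 fun g hg => by
      simpa [hs g hg] using Ideal.mem_map_of_mem Polynomial.C (Ideal.subset_span hg)
  exact hle hf

lemma linearMap_eq_of_isHomogeneous_one {M : Type*} [AddCommMonoid M] [Module k M]
    {φ ψ : MvPolynomial σ k →ₗ[k] M} (h : ∀ i, φ (X i) = ψ (X i)) {f : MvPolynomial σ k}
    (hf : f.IsHomogeneous 1) : φ f = ψ f := by
  rw [← mem_homogeneousSubmodule, homogeneousSubmodule_one_eq_span_X] at hf
  exact LinearMap.eqOn_span (by rintro _ ⟨i, rfl⟩; exact h i) hf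

end Translation

section LinearForms

open MvPolynomial

variable {k σ : Type*} [Field k]

lemma exists_eval_eq_one_of_notMem {F : Submodule k (MvPolynomial σ k)}
    (hF : F ≤ homogeneousSubmodule σ k 1) {f : MvPolynomial σ k} (hf : f.IsHomogeneous 1)
    (hfF : f ∉ F) : ∃ w : σ → k, (∀ g ∈ F, eval w g = 0) ∧ eval w f = 1 := by
  obtain ⟨φ, hφf, hφF⟩ := Submodule.exists_le_ker_of_notMem hfF
  let w i := (φ f)⁻¹ * φ (X i)
  have heval : ∀ {g : MvPolynomial σ k}, g.IsHomogeneous 1 → eval w g = (φ f)⁻¹ * φ g :=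
    linearMap_eq_of_isHomogeneous_one (φ := (aeval w).toLinearMap) (ψ := (φ f)⁻¹ • φ)
      (by simp [w])
  exact ⟨w, fun g hg => by rw [heval (hF hg), LinearMap.mem_ker.1 (hφF hg), mul_zero],
    by rw [heval hf, inv_mul_cancel₀ hφf]⟩

lemma mem_span_of_linear_mul_mem {F : Submodule k (MvPolynomial σ k)}
    (hF : F ≤ homogeneousSubmodule σ k 1) {l f : MvPolynomial σ k} (hl : l.IsHomogeneous 1)
    (hlF : l ∉ F) (hf : l * f ∈ Ideal.span (F : Set (MvPolynomial σ k))) :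
    f ∈ Ideal.span (F : Set (MvPolynomial σ k)) := by
  obtain ⟨w, hwF, hwl⟩ := exists_eval_eq_one_of_notMem hF hl hlF
  simpa using mul_mem_of_translation (x := 1) (lineTranslate w : MvPolynomial σ k →+* _)
    (coeff_zero_lineTranslate w)
    (fun g => lineTranslate_mem_map_C rfl fun g hg => by
      simp [lineTranslate_of_isHomogeneous_one (hF hg), hwF g hg])
    (by simp [lineTranslate_of_isHomogeneous_one hl, hwl])
    (fun h hh => Ideal.mul_mem_left _ _ (by simpa using hh)) hf

end LinearForms

section GenericQuadrics

open scoped Polynomial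
open MvPolynomial

variable {k P J : Type*} [CommRing k]

/-- The linear form `u j` of the generic quadrics, see `genericQuadric`. -/
noncomputable def genericU (k P : Type*) {J : Type*} [CommRing k] (j : J) :
    MvPolynomial (Option P × J) k :=
  X (none, j)

/-- The generic quadric `∑ⱼ a p j * u j` of index `p`: the indeterminates `u j` are indexed by
`(none, j)` and the indeterminates `a p j` by `(some p, j)`. -/
noncomputable def genericQuadric (k : Type*) {P : Type*} (J : Type*) [CommRing k] [Fintype J]
    (p : P) :
    MvPolynomial (Option P × J) k :=
  ∑ j, X (some p, j) * genericU k P j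

lemma isHomogeneous_genericU (j : J) : (genericU k P j).IsHomogeneous 1 := isHomogeneous_X _ _

lemma span_genericU_le :
    Submodule.span k (Set.range (genericU k P (J := J))) ≤ homogeneousSubmodule _ k 1 :=
  Submodule.span_le.2 (by rintro _ ⟨j, rfl⟩; exact isHomogeneous_genericU j)

/-- The substitution multiplying each indeterminate `u j` by the polynomial variable. -/
noncomputable def scaleU (k P J : Type*) [CommRing k] :
    MvPolynomial (Option P × J) k →ₐ[k] (MvPolynomial (Option P × J) k)[X] :=
  aeval fun v => v.1.elim (Polynomial.C (X v) * Polynomial.X) fun _ => Polynomial.C (X v)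

lemma scaleU_of_mem_span {f : MvPolynomial (Option P × J) k}
    (hf : f ∈ Submodule.span k (Set.range (genericU k P (J := J)))) :
    scaleU k P J f = Polynomial.C f * Polynomial.X := by
  induction hf using Submodule.span_induction with
  | mem f h => obtain ⟨j, rfl⟩ := h; simp [scaleU, genericU]
  | zero => simp
  | add f g _ _ hf hg => simp only [map_add, hf, hg, add_mul]
  | smul c f _ hf =>
    have hC : scaleU k P J (C c) = Polynomial.C (C c : MvPolynomial (Option P × J) k) :=
      (scaleU k P J).commutes c
    rw [smul_eq_C_mul, map_mul, hC, hf, map_mul, mul_assoc]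

lemma sub_coeff_zero_scaleU_mem (f : MvPolynomial (Option P × J) k) :
    f - (scaleU k P J f).coeff 0 ∈ Ideal.span (Set.range (genericU k P (J := J))) := by
  let 𝔭 := Ideal.span (Set.range (genericU k P (J := J)))
  have h : (Ideal.Quotient.mk 𝔭).comp (Polynomial.constantCoeff.comp (scaleU k P J).toRingHom) =
      Ideal.Quotient.mk 𝔭 := by
    refine ringHom_ext (fun a => by simp [Polynomial.algebraMap_apply]) ?_
    rintro ⟨_ | p, j⟩
    · have hj : (X (none, j) : MvPolynomial (Option P × J) k) ∈ 𝔭 := Ideal.subset_span ⟨j, rfl⟩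
      simpa [scaleU] using (Ideal.Quotient.eq_zero_iff_mem.2 hj).symm
    · simp [scaleU]
  exact Ideal.Quotient.eq.1 (RingHom.congr_fun h f).symm

lemma coeff_zero_scaleU_of_mem {f : MvPolynomial (Option P × J) k}
    (hf : f ∈ Ideal.span (Set.range (genericU k P (J := J)))) : (scaleU k P J f).coeff 0 = 0 := by
  have hle : Ideal.span (Set.range (genericU k P (J := J))) ≤
      RingHom.ker (Polynomial.constantCoeff.comp (scaleU k P J).toRingHom) :=
    Ideal.span_le.2 (by rintro _ ⟨j, rfl⟩; simp [RingHom.mem_ker, scaleU, genericU])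
  exact hle hf

variable [Fintype J]

/-- The ideal generated by the space `F` (of linear forms in the `u j`) and by the generic quadrics
with index in `s`. -/
noncomputable def genericIdeal (F : Submodule k (MvPolynomial (Option P × J) k)) (s : Set P) :
    Ideal (MvPolynomial (Option P × J) k) :=
  Ideal.span (F ∪ genericQuadric k J '' s)

lemma genericQuadric_mem_span (p : P) :
    genericQuadric k J p ∈ Ideal.span (Set.range (genericU k P (J := J))) :=
  sum_mem fun j _ => Ideal.mul_mem_left _ _ (Ideal.subset_span ⟨j, rfl⟩)

lemma genericIdeal_mono {F F' : Submodule k (MvPolynomial (Option P × J) k)} (h : F ≤ F')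
    (s : Set P) : genericIdeal F s ≤ genericIdeal F' s :=
  Ideal.span_mono (Set.union_subset_union_left _ h)

lemma mem_genericIdeal_insert {F : Submodule k (MvPolynomial (Option P × J) k)} {s : Set P} {p : P}
    {f : MvPolynomial (Option P × J) k} :
    f ∈ genericIdeal F (insert p s) ↔ ∃ a, f - a * genericQuadric k J p ∈ genericIdeal F s := by
  rw [genericIdeal, Set.image_insert_eq, Set.union_insert, Ideal.mem_span_insert]
  exact ⟨fun ⟨a, z, hz, h⟩ => ⟨a, by rwa [h, add_sub_cancel_left]⟩,
    fun ⟨a, h⟩ => ⟨a, _, h, (add_sub_cancel _ _).symm⟩⟩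

lemma mem_genericIdeal_sup_span {F : Submodule k (MvPolynomial (Option P × J) k)} {s : Set P}
    {l f : MvPolynomial (Option P × J) k} (hf : f ∈ genericIdeal (F ⊔ k ∙ l) s) :
    ∃ a, f - a * l ∈ genericIdeal F s := by
  have hle : genericIdeal (F ⊔ k ∙ l) s ≤ Ideal.span {l} ⊔ genericIdeal F s := by
    refine Ideal.span_le.2 (Set.union_subset (fun g hg => ?_) fun g hg => ?_)
    · obtain ⟨a, ha, b, hb, rfl⟩ := Submodule.mem_sup.1 hg
      obtain ⟨c, rfl⟩ := Submodule.mem_span_singleton.1 hb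
      refine add_mem (Ideal.mem_sup_right (Ideal.subset_span (.inl ha))) (Ideal.mem_sup_left ?_)
      rw [smul_eq_C_mul]
      exact Ideal.mul_mem_left _ _ (Ideal.mem_span_singleton_self l)
    · exact Ideal.mem_sup_right (Ideal.subset_span (.inr hg))
  obtain ⟨a, b, hb, h⟩ := Ideal.mem_span_singleton_sup.1 (hle hf)
  exact ⟨a, by rwa [← h, add_sub_cancel_left]⟩

lemma scaleU_genericQuadric (p : P) :
    scaleU k P J (genericQuadric k J p) = Polynomial.C (genericQuadric k J p) * Polynomial.X := by
  simp [genericQuadric, scaleU, genericU, Finset.sum_mul, mul_assoc]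

lemma scaleU_mem_map_C {F : Submodule k (MvPolynomial (Option P × J) k)}
    (hF : F ≤ Submodule.span k (Set.range (genericU k P))) {s : Set P}
    {f : MvPolynomial (Option P × J) k} (hf : f ∈ genericIdeal F s) :
    scaleU k P J f ∈ (genericIdeal F s).map Polynomial.C := by
  have hle : genericIdeal F s ≤ ((genericIdeal F s).map Polynomial.C).comap (scaleU k P J) := by
    refine Ideal.span_le.2 fun g hg => ?_
    have hscale : scaleU k P J g = Polynomial.C g * Polynomial.X := by
      obtain hg | ⟨p, -, rfl⟩ := hg
      exacts [scaleU_of_mem_span (hF hg), scaleU_genericQuadric p]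
    rw [SetLike.mem_coe, Ideal.mem_comap, hscale]
    exact Ideal.mul_mem_right _ _ (Ideal.mem_map_of_mem Polynomial.C (Ideal.subset_span hg))
  exact hle hf

-- If `l * f - g * q` lies in the ideal, where `q` is the quadric, so does its part of degree one in
-- the `u j`; hence the part of `g` of degree zero in the `u j` can be discarded.
lemma exists_mem_span_sub_mul_genericQuadric_mem
    {F : Submodule k (MvPolynomial (Option P × J) k)}
    (hF : F ≤ Submodule.span k (Set.range (genericU k P))) {s : Set P} {p : P}
    {l f : MvPolynomial (Option P × J) k} (hl : l ∈ Submodule.span k (Set.range (genericU k P)))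
    (hf : f ∈ Ideal.span (Set.range (genericU k P (J := J))))
    (h : l * f ∈ genericIdeal F (insert p s)) :
    ∃ g ∈ Ideal.span (Set.range (genericU k P (J := J))),
      l * f - g * genericQuadric k J p ∈ genericIdeal F s := by
  obtain ⟨g, hg⟩ := mem_genericIdeal_insert.1 h
  have hcoeff := Ideal.mem_map_C_iff.1 (scaleU_mem_map_C hF hg) 1
  rw [map_sub, map_mul, map_mul, scaleU_of_mem_span hl, scaleU_genericQuadric, mul_right_comm,
    ← mul_assoc, Polynomial.coeff_sub, Polynomial.coeff_mul_X, Polynomial.coeff_C_mul,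
    Polynomial.coeff_mul_X, Polynomial.coeff_mul_C, coeff_zero_scaleU_of_mem hf, mul_zero,
    zero_sub, neg_mem_iff] at hcoeff
  refine ⟨_, sub_coeff_zero_scaleU_mem g, ?_⟩
  convert add_mem hg hcoeff using 1
  ring

lemma genericU_mul_mem_of_genericQuadric_mul_mem
    {F : Submodule k (MvPolynomial (Option P × J) k)}
    (hF : F ≤ Submodule.span k (Set.range (genericU k P))) {s : Set P} {p : P} (hp : p ∉ s) {j : J}
    (hcolon : ∀ h, genericU k P j * h ∈ genericIdeal F s →
      genericQuadric k J p * h ∈ genericIdeal F s)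
    {g : MvPolynomial (Option P × J) k}
    (hg : genericQuadric k J p * g ∈ genericIdeal F s) : genericU k P j * g ∈ genericIdeal F s := by
  classical
  let w : Option P × J → k := Pi.single (some p, j) 1
  have hwU : ∀ i, eval w (genericU k P i) = 0 := fun i => by simp [w, genericU]
  have htrans : ∀ p', lineTranslate w (genericQuadric k J p') =
      Polynomial.C (genericQuadric k J p') + Polynomial.C
        (∑ i, C (eval w (X (some p', i))) * genericU k P i) * Polynomial.X := fun p' =>
    lineTranslate_sum_mul (fun i => isHomogeneous_X _ _) isHomogeneous_genericU hwU
  refine mul_mem_of_translation (lineTranslate w : MvPolynomial _ k →+* _)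
    (coeff_zero_lineTranslate w) (fun f => lineTranslate_mem_map_C rfl ?_) ?_ hcolon hg
  · rintro f (hf | ⟨p', hp', rfl⟩)
    · have hwf : eval w f = 0 := by
        have hle : Submodule.span k (Set.range (genericU k P (J := J))) ≤
            LinearMap.ker (aeval w : MvPolynomial _ k →ₐ[k] k).toLinearMap :=
          Submodule.span_le.2 (by rintro _ ⟨i, rfl⟩; exact hwU i)
        exact hle (hF hf)
      simp [lineTranslate_of_isHomogeneous_one (span_genericU_le (hF hf)), hwf]
    · have hne : p' ≠ p := fun h => hp (h ▸ hp')
      simp [htrans, w, hne]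
  · simp [htrans, w, Pi.single_apply, apply_ite, ite_mul]

end GenericQuadrics

section GenericColon

open MvPolynomial

variable {k P J : Type*} [Field k] [Fintype J]

lemma mem_genericIdeal_of_linear_mul_mem (s : Finset P)
    {F : Submodule k (MvPolynomial (Option P × J) k)}
    (hF : F ≤ Submodule.span k (Set.range (genericU k P)))
    {l f : MvPolynomial (Option P × J) k} (hl : l ∈ Submodule.span k (Set.range (genericU k P)))
    (hlF : l ∉ F) (hf : f ∈ Ideal.span (Set.range (genericU k P (J := J))))
    (h : l * f ∈ genericIdeal F (s : Set P)) : f ∈ genericIdeal F (s : Set P) := by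
  classical
  induction s using Finset.induction_on generalizing F l f with
  | empty =>
    rw [genericIdeal, Finset.coe_empty, Set.image_empty, Set.union_empty] at h ⊢
    exact mem_span_of_linear_mul_mem (hF.trans span_genericU_le) (span_genericU_le hl) hlF h
  | insert p s hp ih =>
    rw [Finset.coe_insert] at h ⊢
    obtain ⟨g, hg, hlfg⟩ := exists_mem_span_sub_mul_genericQuadric_mem hF hl hf h
    let F' := F ⊔ k ∙ l
    have hF' : F' ≤ Submodule.span k (Set.range (genericU k P)) :=
      sup_le hF ((Submodule.span_singleton_le_iff_mem _ _).2 hl)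
    have hlF' : l ∈ genericIdeal F' (s : Set P) :=
      Ideal.subset_span (.inl (Submodule.mem_sup_right (Submodule.mem_span_singleton_self l)))
    have hqg : genericQuadric k J p * g ∈ genericIdeal F' (s : Set P) := by
      convert sub_mem (Ideal.mul_mem_left _ f hlF') (genericIdeal_mono le_sup_left _ hlfg) using 1
      ring
    have hgF' : g ∈ genericIdeal F' (s : Set P) := by
      by_cases hU : Set.range (genericU k P (J := J)) ⊆ F'
      · exact Ideal.span_mono (hU.trans Set.subset_union_left) hg
      obtain ⟨_, ⟨j, rfl⟩, hj⟩ := Set.not_subset.1 hU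
      have hu : genericU k P j ∈ Submodule.span k (Set.range (genericU k P)) :=
        Submodule.subset_span ⟨j, rfl⟩
      refine ih hF' hu hj hg
        (genericU_mul_mem_of_genericQuadric_mul_mem hF' hp (fun h hh => ?_) hqg)
      refine ih hF' hu hj (Ideal.mul_mem_right _ _ (genericQuadric_mem_span p)) ?_
      rw [mul_left_comm]
      exact Ideal.mul_mem_left _ _ hh
    obtain ⟨a, ha⟩ := mem_genericIdeal_sup_span hgF'
    refine mem_genericIdeal_insert.2 ⟨a, ih hF hl hlF
      (sub_mem hf (Ideal.mul_mem_left _ _ (genericQuadric_mem_span p))) ?_⟩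
    convert add_mem hlfg (Ideal.mul_mem_right (genericQuadric k J p) _ ha) using 1
    ring

lemma genericU_mul_mem_of_linear_mul_mem [Finite P] {l f : MvPolynomial (Option P × J) k}
    (hl : l ∈ Submodule.span k (Set.range (genericU k P))) (hl0 : l ≠ 0)
    (h : l * f ∈ Ideal.span (Set.range (genericQuadric k J (P := P)))) (j : J) :
    genericU k P j * f ∈ Ideal.span (Set.range (genericQuadric k J (P := P))) := by
  cases nonempty_fintype P
  have hbot : genericIdeal ⊥ (Finset.univ : Finset P) =
      Ideal.span (Set.range (genericQuadric k J (P := P))) := by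
    simp [genericIdeal]
  rw [← hbot] at h ⊢
  refine mem_genericIdeal_of_linear_mul_mem Finset.univ bot_le hl (by simpa using hl0)
    (Ideal.mul_mem_right _ _ (Ideal.subset_span ⟨j, rfl⟩)) ?_
  rw [mul_left_comm]
  exact Ideal.mul_mem_left _ _ h

end GenericColon

section FreeExtension

open MvPolynomial

lemma span_range_coe_basis {R M ι : Type*} [Semiring R] [AddCommMonoid M] [Module R M]
    {W : Submodule R M} (b : Module.Basis ι R W) :
    Submodule.span R (Set.range fun i => (b i : M)) = W := by
  change Submodule.span R (Set.range (W.subtype ∘ b)) = W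
  rw [Set.range_comp, Submodule.span_image, b.span_eq, Submodule.map_top, Submodule.range_subtype]

lemma mem_ideal_map_iff_repr_mem {A B ι : Type*} [CommRing A] [CommRing B] [Algebra A B]
    (b : Module.Basis ι A B) {I : Ideal A} {g : B} :
    g ∈ I.map (algebraMap A B) ↔ ∀ i, b.repr g i ∈ I := by
  refine ⟨fun hg i => ?_, fun hg => ?_⟩
  · have hg' : g ∈ I • (⊤ : Submodule A B) := by rwa [Ideal.smul_top_eq_map]
    induction hg' using Submodule.smul_induction_on' with
    | smul r hr x _ => simpa using I.mul_mem_right _ hr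
    | add x hx y hy ihx ihy =>
      rw [Ideal.smul_top_eq_map] at hx hy
      simpa using add_mem (ihx hx) (ihy hy)
  · rw [← b.linearCombination_repr g, Finsupp.linearCombination_apply]
    refine sum_mem fun i _ => ?_
    simpa only [Algebra.smul_def] using
      Ideal.mul_mem_right _ _ (Ideal.mem_map_of_mem (algebraMap A B) (hg i))

lemma algebraMap_mul_mem_map_iff {A B : Type*} [CommRing A] [CommRing B] [Algebra A B]
    [Module.Free A B] {I : Ideal A} {a : A} {g : B} :
    algebraMap A B a * g ∈ I.map (algebraMap A B) ↔
      g ∈ (I.colon {a}).map (algebraMap A B) := by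
  let b := Module.Free.chooseBasis A B
  rw [← Algebra.smul_def]
  simp [mem_ideal_map_iff_repr_mem b, Submodule.mem_colon_singleton, mul_comm]

variable {k : Type*} {σ : Type*} [Field k]

lemma exists_algEquiv_of_basis {κ : Type*}
    (b : Module.Basis κ k (homogeneousSubmodule σ k 1)) :
    ∃ e : MvPolynomial κ k ≃ₐ[k] MvPolynomial σ k, ∀ i, e (X i) = b i := by
  obtain ⟨c, hc⟩ : ∃ c : Module.Basis σ k (homogeneousSubmodule σ k 1),
      ∀ i, (c i : MvPolynomial σ k) = X i :=
    ⟨(Module.Basis.span (linearIndependent_X σ k)).map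
      (LinearEquiv.ofEq _ _ homogeneousSubmodule_one_eq_span_X.symm), fun i => by simp⟩
  have hval : (SymmetricAlgebra.equivMvPolynomial c).toLinearMap ∘ₗ SymmetricAlgebra.ι k _ =
      Submodule.subtype _ :=
    c.ext fun i => by simp [SymmetricAlgebra.equivMvPolynomial_ι_apply, hc]
  exact ⟨(SymmetricAlgebra.equivMvPolynomial b).symm.trans (SymmetricAlgebra.equivMvPolynomial c),
    fun i => by simpa using LinearMap.congr_fun hval (b i)⟩

lemma exists_algEquiv_of_linearIndependent {ι : Type*} {u : ι → MvPolynomial σ k}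
    (hu : ∀ i, (u i).IsHomogeneous 1) (hli : LinearIndependent k u) :
    ∃ (E : Set (homogeneousSubmodule σ k 1))
      (e : MvPolynomial (ι ⊕ E) k ≃ₐ[k] MvPolynomial σ k), ∀ i, e (X (.inl i)) = u i := by
  let u' : ι → homogeneousSubmodule σ k 1 := fun i => ⟨u i, hu i⟩
  have hli' : LinearIndependent k u' := .of_comp (Submodule.subtype _) hli
  obtain ⟨e, he⟩ := exists_algEquiv_of_basis (Module.Basis.sumExtend hli')
  have hinl (i : ι) : Module.Basis.sumExtend hli' (.inl i) = u' i := by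
    simp [Module.Basis.sumExtend]
    rfl
  exact ⟨_, e, fun i => by rw [he, hinl]⟩

lemma free_aeval {ι : Type*} {u : ι → MvPolynomial σ k} (hu : ∀ i, (u i).IsHomogeneous 1)
    (hli : LinearIndependent k u) :
    letI := (aeval u : MvPolynomial ι k →ₐ[k] MvPolynomial σ k).toRingHom.toAlgebra
    Module.Free (MvPolynomial ι k) (MvPolynomial σ k) := by
  let := (aeval u : MvPolynomial ι k →ₐ[k] MvPolynomial σ k).toRingHom.toAlgebra
  obtain ⟨E, e, he⟩ := exists_algEquiv_of_linearIndependent hu hli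
  let e' := (sumAlgEquiv k E ι).symm.trans ((renameEquiv k (Equiv.sumComm E ι)).trans e)
  have he' : e'.toAlgHom.comp (IsScalarTower.toAlgHom k (MvPolynomial ι k)
      (MvPolynomial E (MvPolynomial ι k))) = aeval u :=
    algHom_ext fun i => by simp [e', he]
  exact Module.Free.of_equiv
    (AlgEquiv.ofRingEquiv (f := e'.toRingEquiv) (AlgHom.congr_fun he')).toLinearEquiv

end FreeExtension

section Bound

open MvPolynomial

variable {k : Type u} [Field k] {σ : Type}

lemma hasProjectiveDimensionLE_quotient_map_aeval {V : Type} [Fintype V] {ψ : V → MvPolynomial σ k}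
    (h1 : ∀ v, (ψ v).IsHomogeneous 1) (hli : LinearIndependent k ψ)
    (I : Ideal (MvPolynomial V k)) :
    HasProjectiveDimensionLE (ModuleCat.of (MvPolynomial σ k)
      (MvPolynomial σ k ⧸ I.map (aeval ψ : MvPolynomial V k →ₐ[k] MvPolynomial σ k)))
      (Fintype.card V) := by
  let := (aeval ψ : MvPolynomial V k →ₐ[k] MvPolynomial σ k).toRingHom.toAlgebra
  have := free_aeval h1 hli
  refine hasProjectiveDimensionLE_quotient_map (MvPolynomial σ k) I ?_
  rw [← Nat.card_eq_fintype_card, ← zero_add (Nat.card V)]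
  exact (GlobalDimensionLE.of_field k).mvPolynomial V _

lemma hasProjectiveDimensionLE_of_subset_adjoin {W : Submodule k (MvPolynomial σ k)}
    [FiniteDimensional k W] (hW : W ≤ homogeneousSubmodule σ k 1) {s : Set (MvPolynomial σ k)}
    (hs : s ⊆ Algebra.adjoin k (W : Set (MvPolynomial σ k))) :
    HasProjectiveDimensionLE (ModuleCat.of (MvPolynomial σ k) (MvPolynomial σ k ⧸ Ideal.span s))
      (Module.finrank k W) := by
  let b := Module.finBasis k W
  let φ : MvPolynomial (Fin (Module.finrank k W)) k →ₐ[k] MvPolynomial σ k :=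
    aeval fun i => (b i : MvPolynomial σ k)
  have hrange : s ⊆ Set.range φ := by
    rw [← AlgHom.coe_range, ← Algebra.adjoin_range_eq_range_aeval]
    rwa [← Algebra.adjoin_span, span_range_coe_basis b]
  have hli := b.linearIndependent.map' W.subtype W.ker_subtype
  have h := hasProjectiveDimensionLE_quotient_map_aeval (fun i => hW (b i).2) hli
    (Ideal.span (φ ⁻¹' s))
  rwa [Ideal.map_span, Fintype.card_fin, Set.image_preimage_eq_of_subset hrange] at h

variable {P J : Type} [Fintype J]

lemma aeval_genericQuadric (ψ : Option P × J → MvPolynomial σ k) (p : P) :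
    aeval ψ (genericQuadric k J p) = ∑ j, ψ (some p, j) * ψ (none, j) := by
  simp [genericQuadric, genericU]

lemma lineTranslate_mem_map_genericQuadric {ψ : Option P × J → MvPolynomial σ k}
    (hψ : ∀ v, (ψ v).IsHomogeneous 1) {w : σ → k} (hw : ∀ v, eval w (ψ v) = 0)
    {I : Ideal (MvPolynomial σ k)}
    (hI : I = (Ideal.span (Set.range (genericQuadric k J (P := P)))).map (aeval ψ))
    {f : MvPolynomial σ k} (hf : f ∈ I) : lineTranslate w f ∈ I.map Polynomial.C := by
  refine lineTranslate_mem_map_C (hI.trans (Ideal.map_span _ _)) ?_ hf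
  rintro _ ⟨_, ⟨p, rfl⟩, rfl⟩
  rw [aeval_genericQuadric,
    lineTranslate_sum_mul (fun j => hψ (some p, j)) (fun j => hψ (none, j)) fun j => hw _]
  simp [hw]

lemma sum_mul_mem_map_genericQuadric [Finite P] {l : MvPolynomial (Option P × J) k}
    (hl : l ∈ Submodule.span k (Set.range (genericU k P))) (hl0 : l ≠ 0)
    (ψ : Option P × J → MvPolynomial σ k) (b : J → MvPolynomial σ k) {g : MvPolynomial σ k}
    (hg : g ∈ ((Ideal.span (Set.range (genericQuadric k J))).colon {l}).map (aeval ψ)) :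
    (∑ j, b j * ψ (none, j)) * g ∈
      (Ideal.span (Set.range (genericQuadric k J (P := P)))).map (aeval ψ) := by
  let I := (Ideal.span (Set.range (genericQuadric k J (P := P)))).map (aeval ψ)
  have hle : ((Ideal.span (Set.range (genericQuadric k J))).colon {l}).map (aeval ψ) ≤
      I.colon {∑ j, b j * ψ (none, j)} := by
    refine Ideal.map_le_iff_le_comap.2 fun h hh => Submodule.mem_colon_singleton.2 ?_
    rw [smul_eq_mul, Finset.mul_sum]
    refine sum_mem fun j _ => ?_
    have hj := genericU_mul_mem_of_linear_mul_mem hl hl0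
      (by simpa [Submodule.mem_colon_singleton, mul_comm] using hh) j
    have hmem := Ideal.mul_mem_left _ (b j) (Ideal.mem_map_of_mem (aeval ψ) hj)
    rw [map_mul, genericU, aeval_X] at hmem
    convert hmem using 1
    ring
  rw [mul_comm]
  exact Submodule.mem_colon_singleton.1 (hle hg)

-- For a vector `w` killing the `ψ v` but not all `b j`, the derivative `∑ⱼ b j (w) * ψ (none, j)`
-- of the quadric along `w` has the same colon ideal and, unlike the quadric, lies in `k[ψ]`.
lemma exists_colon_genericQuadric [Finite P] {ψ : Option P × J → MvPolynomial σ k}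
    (hψ : ∀ v, (ψ v).IsHomogeneous 1) (hli : LinearIndependent k ψ) {b : J → MvPolynomial σ k}
    (hb : ∀ j, (b j).IsHomogeneous 1) {j₀ : J}
    (hj₀ : b j₀ ∉ Submodule.span k (Set.range ψ)) :
    ∃ H : Ideal (MvPolynomial (Option P × J) k), ∀ g,
      (∑ j, b j * ψ (none, j)) * g ∈
        (Ideal.span (Set.range (genericQuadric k J (P := P)))).map (aeval ψ) ↔
      g ∈ H.map (aeval ψ) := by
  classical
  let I₀ := Ideal.span (Set.range (genericQuadric k J (P := P)))
  obtain ⟨w, hwψ, hwb⟩ := exists_eval_eq_one_of_notMem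
    (Submodule.span_le.2 (by rintro _ ⟨v, rfl⟩; exact hψ v)) (hb j₀) hj₀
  replace hwψ v : eval w (ψ v) = 0 := hwψ _ (Submodule.subset_span ⟨v, rfl⟩)
  let l : MvPolynomial (Option P × J) k := ∑ j, C (eval w (b j)) * genericU k P j
  have hl : l ∈ Submodule.span k (Set.range (genericU k P)) := sum_mem fun j _ => by
    rw [← smul_eq_C_mul]
    exact Submodule.smul_mem _ _ (Submodule.subset_span ⟨j, rfl⟩)
  have hl0 : l ≠ 0 := fun h => by
    simpa [l, genericU, Pi.single_apply, hwb] using congrArg (eval (Pi.single (none, j₀) 1)) h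
  have hcolon : ∀ g, aeval ψ l * g ∈ I₀.map (aeval ψ) ↔ g ∈ (I₀.colon {l}).map (aeval ψ) := by
    let := (aeval ψ : MvPolynomial (Option P × J) k →ₐ[k] MvPolynomial σ k).toRingHom.toAlgebra
    have := free_aeval hψ hli
    exact fun g => algebraMap_mul_mem_map_iff
  refine ⟨I₀.colon {l}, fun g => ⟨fun hg => (hcolon g).1 ?_,
    sum_mul_mem_map_genericQuadric hl hl0 ψ b⟩⟩
  refine mul_mem_of_translation (lineTranslate w : MvPolynomial _ k →+* _)
    (coeff_zero_lineTranslate w) (fun f => lineTranslate_mem_map_genericQuadric hψ hwψ rfl) ?_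
    (fun h hh => sum_mul_mem_map_genericQuadric hl hl0 ψ b ((hcolon h).1 hh)) hg
  simpa [l, genericU] using lineTranslate_sum_mul hb (fun j => hψ (none, j)) fun j => hwψ _

lemma hasProjectiveDimensionLE_span_insert [Fintype P] {ψ : Option P × J → MvPolynomial σ k}
    (hψ : ∀ v, (ψ v).IsHomogeneous 1) (hli : LinearIndependent k ψ) {b : J → MvPolynomial σ k}
    (hb : ∀ j, (b j).IsHomogeneous 1) {j₀ : J}
    (hj₀ : b j₀ ∉ Submodule.span k (Set.range ψ)) :
    HasProjectiveDimensionLE (ModuleCat.of (MvPolynomial σ k) (MvPolynomial σ k ⧸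
      Ideal.span (insert (∑ j, b j * ψ (none, j))
        (Set.range fun p => ∑ j, ψ (some p, j) * ψ (none, j)))))
      (Fintype.card (Option P × J) + 1) := by
  obtain ⟨H, hH⟩ := exists_colon_genericQuadric hψ hli hb hj₀
  have h := hasProjectiveDimensionLE_quotient_sup_span hH
    (hasProjectiveDimensionLE_quotient_map_aeval hψ hli H)
    (hasProjectiveDimensionLE_quotient_map_aeval hψ hli _)
  rwa [Ideal.map_span, ← Set.range_comp, sup_comm, ← Ideal.span_union, Set.singleton_union,
    show aeval ψ ∘ genericQuadric k J = fun p => ∑ j, ψ (some p, j) * ψ (none, j) from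
      funext (aeval_genericQuadric ψ)] at h

end Bound

section LinearSyzygies

open MvPolynomial Module

lemma exists_row_linearIndependent {k M ι J : Type*} [Field k] [AddCommGroup M] [Module k M]
    [Fintype ι] [Nonempty ι] [Fintype J] {φ : Option ι × J → M}
    (hli : LinearIndependent k fun j => φ (none, j))
    (hcard : Fintype.card (Option ι × J) ≤ finrank k (Submodule.span k (Set.range φ)) + 1) :
    ∃ i₀, LinearIndependent k
      fun v : Option {i : ι // i ≠ i₀} × J => φ (v.1.map Subtype.val, v.2) := by
  classical
  have hrow : LinearIndepOn k φ (Set.range fun j => (none, j)) :=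
    (linearIndepOn_range_iff (fun _ _ h => congrArg Prod.snd h) φ).2 hli
  let B := hrow.extend (Set.subset_univ _)
  have hB : LinearIndepOn k φ B := hrow.linearIndepOn_extend (Set.subset_univ _)
  have hspan : Submodule.span k (φ '' B) = Submodule.span k (Set.range φ) := by
    rw [hrow.span_image_extend_eq_span_image, Set.image_univ]
  have hcompl : (Bᶜ).ncard ≤ 1 := by
    have hBcard : finrank k (Submodule.span k (φ '' B)) = B.ncard := by
      rw [Set.image_eq_range, finrank_span_eq_card hB, Set.ncard_eq_toFinset_card',
        Set.toFinset_card]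
    rw [hspan] at hBcard
    have := Set.ncard_add_ncard_compl B
    rw [Nat.card_eq_fintype_card] at this
    omega
  obtain ⟨i₀, hi₀⟩ : ∃ i₀, ∀ v : Option ι × J, v.1 ≠ some i₀ → v ∈ B := by
    rcases Set.eq_empty_or_nonempty Bᶜ with hempty | ⟨⟨_ | i₀, j₀⟩, hmem⟩
    · exact ⟨Classical.arbitrary ι, fun v _ => Set.compl_empty_iff.1 hempty ▸ Set.mem_univ v⟩
    · exact absurd (hrow.subset_extend (Set.subset_univ _) ⟨j₀, rfl⟩) hmem
    · refine ⟨i₀, fun v hv => by_contra fun hvB => hv ?_⟩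
      rw [(Set.ncard_le_one (Set.toFinite _)).1 hcompl v hvB _ hmem]
  have hinj : Function.Injective fun v : Option {i : ι // i ≠ i₀} × J =>
      (v.1.map Subtype.val, v.2) := fun v w h =>
    Prod.ext (Option.map_injective Subtype.val_injective (Prod.ext_iff.1 h).1) (Prod.ext_iff.1 h).2
  refine ⟨i₀, (linearIndepOn_range_iff hinj φ).1 (hB.mono ?_)⟩
  rintro _ ⟨⟨_ | i, j⟩, rfl⟩
  · exact hi₀ _ (by simp)
  · exact hi₀ _ (by simpa using i.2)

lemma card_subtype_ne_add_one {ι : Type*} [Fintype ι] [DecidableEq ι] (i₀ : ι) :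
    Fintype.card {i // i ≠ i₀} + 1 = Fintype.card ι := by
  have := Fintype.card_pos_iff.2 ⟨i₀⟩
  rw [Fintype.card_subtype_compl, Fintype.card_subtype_eq]
  omega

lemma exists_notMem_span_of_card_le {k M ι J : Type*} [Field k] [AddCommGroup M] [Module k M]
    [Fintype ι] [Fintype J] {φ : Option ι × J → M} (hJ : 2 ≤ Fintype.card J)
    (hcard : Fintype.card (Option ι × J) ≤ finrank k (Submodule.span k (Set.range φ)) + 1)
    (i₀ : ι) :
    ∃ j₀, φ (some i₀, j₀) ∉ Submodule.span k
      (Set.range fun v : Option {i : ι // i ≠ i₀} × J => φ (v.1.map Subtype.val, v.2)) := by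
  classical
  by_contra! h
  set ψ := fun v : Option {i : ι // i ≠ i₀} × J => φ (v.1.map Subtype.val, v.2)
  have hle : Submodule.span k (Set.range φ) ≤ Submodule.span k (Set.range ψ) := by
    refine Submodule.span_le.2 (Set.range_subset_iff.2 ?_)
    rintro ⟨_ | i, j⟩
    · exact Submodule.subset_span ⟨(none, j), rfl⟩
    · rcases eq_or_ne i i₀ with rfl | hi
      · exact h j
      · exact Submodule.subset_span ⟨(some ⟨i, hi⟩, j), rfl⟩
  have : FiniteDimensional k (Submodule.span k (Set.range ψ)) :=
    .span_of_finite k (Set.finite_range ψ)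
  have hrank := (Submodule.finrank_mono hle).trans (finrank_range_le_card ψ)
  have hlt : Fintype.card (Option {i : ι // i ≠ i₀} × J) + 2 ≤ Fintype.card (Option ι × J) := by
    simp only [Fintype.card_prod, Fintype.card_option,
      card_subtype_ne_add_one, add_mul, one_mul]
    omega
  omega

variable {k : Type u} [Field k] {σ ι J : Type} [Fintype J]

lemma hasProjectiveDimensionLE_span_sum_mul_finrank [Finite ι] {φ : Option ι × J → MvPolynomial σ k}
    (hφ : ∀ v, (φ v).IsHomogeneous 1) :
    HasProjectiveDimensionLE (ModuleCat.of (MvPolynomial σ k) (MvPolynomial σ k ⧸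
      Ideal.span (Set.range fun i => ∑ j, φ (some i, j) * φ (none, j))))
      (finrank k (Submodule.span k (Set.range φ))) := by
  have : FiniteDimensional k (Submodule.span k (Set.range φ)) :=
    .span_of_finite k (Set.finite_range φ)
  have hmem v : φ v ∈ Submodule.span k (Set.range φ) := Submodule.subset_span ⟨v, rfl⟩
  refine hasProjectiveDimensionLE_of_subset_adjoin
    (Submodule.span_le.2 (Set.range_subset_iff.2 hφ)) (Set.range_subset_iff.2 fun i =>
      sum_mem fun j _ => mul_mem ?_ ?_)
  exacts [Algebra.subset_adjoin (hmem (some i, j)), Algebra.subset_adjoin (hmem (none, j))]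

theorem hasProjectiveDimensionLE_span_sum_mul [Fintype ι] {a : ι → J → MvPolynomial σ k}
    {u : J → MvPolynomial σ k} (ha : ∀ i j, (a i j).IsHomogeneous 1)
    (hu : ∀ j, (u j).IsHomogeneous 1) (hli : LinearIndependent k u) (hJ : 3 ≤ Fintype.card J) :
    HasProjectiveDimensionLE (ModuleCat.of (MvPolynomial σ k) (MvPolynomial σ k ⧸
      Ideal.span (Set.range fun i => ∑ j, a i j * u j)))
      (Fintype.card J * Fintype.card ι + (Fintype.card J - 2)) := by
  classical
  let φ : Option ι × J → MvPolynomial σ k := fun v => v.1.elim (u v.2) fun i => a i v.2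
  have hφ : ∀ v, (φ v).IsHomogeneous 1 := by
    rintro ⟨_ | i, j⟩
    exacts [hu j, ha i j]
  rcases isEmpty_or_nonempty ι with hι | hι
  · refine hasProjectiveDimensionLE_mono (Nat.zero_le _) ?_
    simpa using hasProjectiveDimensionLE_of_subset_adjoin (bot_le (a := homogeneousSubmodule σ k 1))
      (Set.range_subset_iff.2 fun i => isEmptyElim i)
  by_cases hfew : finrank k (Submodule.span k (Set.range φ)) ≤
      Fintype.card J * Fintype.card ι + (Fintype.card J - 2)
  · have h := hasProjectiveDimensionLE_span_sum_mul_finrank hφ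
    simp only [φ, Option.elim_some, Option.elim_none] at h
    exact hasProjectiveDimensionLE_mono hfew h
  have hcard : Fintype.card (Option ι × J) = Fintype.card J * Fintype.card ι + Fintype.card J := by
    rw [Fintype.card_prod, Fintype.card_option]
    ring
  obtain ⟨i₀, hψ⟩ := exists_row_linearIndependent (k := k) (φ := φ) hli (by omega)
  obtain ⟨j₀, hj₀⟩ := exists_notMem_span_of_card_le (k := k) (φ := φ) (by omega) (by omega) i₀
  set ψ := fun v : Option {i : ι // i ≠ i₀} × J => φ (v.1.map Subtype.val, v.2)
  have hgen : insert (∑ j, a i₀ j * ψ (none, j))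
      (Set.range fun p => ∑ j, ψ (some p, j) * ψ (none, j)) =
        Set.range fun i => ∑ j, a i j * u j := by
    refine Set.Subset.antisymm (Set.insert_subset ⟨i₀, rfl⟩
      (Set.range_subset_iff.2 fun p => ⟨p, rfl⟩)) (Set.range_subset_iff.2 fun i => ?_)
    rcases eq_or_ne i i₀ with rfl | hi
    exacts [.inl rfl, .inr ⟨⟨i, hi⟩, rfl⟩]
  have h := hasProjectiveDimensionLE_span_insert (fun v => hφ _) hψ (ha i₀) hj₀
  rw [hgen, Fintype.card_prod, Fintype.card_option, card_subtype_ne_add_one, mul_comm] at h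
  exact hasProjectiveDimensionLE_mono (by omega) h

end LinearSyzygies

section HomogeneousAssociatedPrimes

open DirectSum Finset.HasAntidiagonal

variable {A σ : Type*} [CommRing A] [SetLike σ A] [AddSubgroupClass σ A] {𝒜 : ℕ → σ}
  [GradedRing 𝒜] {I : Ideal A}

lemma decompose_pow_mul_mem_of_lower_mul_mem (hI : I.IsHomogeneous 𝒜) {f m : A} (hfm : f * m ∈ I)
    {n : ℕ} (hlt : ∀ i < n, (decompose 𝒜 f i : A) * m ∈ I) (j : ℕ) :
    (decompose 𝒜 f n : A) ^ (j + 1) * (decompose 𝒜 m j : A) ∈ I := by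
  induction j using Nat.strong_induction_on with
  | _ j ih =>
    let a : A := decompose 𝒜 f n
    have hsum : ∑ ij ∈ antidiagonal (n + j),
        a ^ j * ((decompose 𝒜 f ij.1 : A) * (decompose 𝒜 m ij.2 : A)) ∈ I := by
      rw [← Finset.mul_sum, ← coe_mul_apply_eq_sum_antidiagonal, ← decompose_mul]
      exact I.mul_mem_left _ (hI _ hfm)
    rw [← Finset.add_sum_erase _ _ (mem_antidiagonal.2 rfl : (n, j) ∈ _)] at hsum
    rw [pow_succ, mul_assoc]
    refine (I.add_mem_iff_left (sum_mem fun ij hij => ?_)).1 hsum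
    obtain ⟨hne, hij⟩ := Finset.mem_erase.1 hij
    rw [mem_antidiagonal] at hij
    rcases lt_trichotomy ij.1 n with hi | hi | hi
    · have := hI (ij.1 + ij.2) (hlt ij.1 hi)
      rw [coe_decompose_mul_add_of_left_mem 𝒜 (SetLike.coe_mem _)] at this
      exact I.mul_mem_left _ this
    · exact absurd (Prod.ext hi (by dsimp only; omega)) hne
    · obtain ⟨c, rfl⟩ : ∃ c, j = (ij.2 + 1) + c := ⟨j - (ij.2 + 1), by omega⟩
      rw [pow_add, mul_left_comm, mul_comm (a ^ _), mul_assoc]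
      exact I.mul_mem_left _ (I.mul_mem_left _ (ih ij.2 (by omega)))

lemma exists_decompose_pow_mul_mem (hI : I.IsHomogeneous 𝒜) {f m : A} (hfm : f * m ∈ I)
    {n : ℕ} (hlt : ∀ i < n, (decompose 𝒜 f i : A) * m ∈ I) :
    ∃ N, (decompose 𝒜 f n : A) ^ N * m ∈ I := by
  classical
  refine ⟨(decompose 𝒜 m).support.sup id + 1, ?_⟩
  rw [← sum_support_decompose 𝒜 m, Finset.mul_sum]
  refine sum_mem fun j hj => ?_
  rw [sum_support_decompose]
  have hle : j + 1 ≤ (decompose 𝒜 m).support.sup id + 1 :=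
    Nat.succ_le_succ (Finset.le_sup (f := id) hj)
  exact I.mem_of_dvd (mul_dvd_mul_right (pow_dvd_pow _ hle) _)
    (decompose_pow_mul_mem_of_lower_mul_mem hI hfm hlt j)

theorem isHomogeneous_of_isAssociatedPrime [IsNoetherianRing A] (hI : I.IsHomogeneous 𝒜)
    {p : Ideal A} (hp : IsAssociatedPrime p (A ⧸ I)) : p.IsHomogeneous 𝒜 := by
  obtain ⟨hprime, x, hx⟩ := isAssociatedPrime_iff.1 hp
  obtain ⟨m, rfl⟩ := Ideal.Quotient.mk_surjective x
  have hmem (g : A) : g ∈ p ↔ g * m ∈ I := by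
    rw [hx, Submodule.mem_colon_singleton, Submodule.mem_bot, ← Ideal.Quotient.eq_zero_iff_mem]
    rfl
  intro n f hf
  induction n using Nat.strong_induction_on with
  | _ n ih =>
    obtain ⟨N, hN⟩ :=
      exists_decompose_pow_mul_mem hI ((hmem f).1 hf) fun i hi => (hmem _).1 (ih i hi)
    exact hprime.mem_of_pow_mem N ((hmem _).2 hN)

section
open MvPolynomial

attribute [local instance] MvPolynomial.gradedAlgebra

lemma isHomogeneous_of_isAssociatedPrime_span {k σ ι : Type*} [Field k] [Finite σ]
    {f : ι → MvPolynomial σ k} {n : ℕ} (hf : ∀ i, (f i).IsHomogeneous n)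
    {p : Ideal (MvPolynomial σ k)}
    (hp : IsAssociatedPrime p (MvPolynomial σ k ⧸ Ideal.span (Set.range f))) :
    p.IsHomogeneous (homogeneousSubmodule σ k) :=
  isHomogeneous_of_isAssociatedPrime
    (Ideal.homogeneous_span _ _ (Set.forall_mem_range.2 fun i => ⟨n, hf i⟩)) hp

end

end HomogeneousAssociatedPrimes

section Reductions

open MvPolynomial

variable {k R : Type*} [CommRing k] [CommRing R] [Algebra k R]

/-- Northcott–Rees reductions, for the subspaces of a `k`-algebra: `W` is a reduction of `V` if
`W ≤ V` and `V ^ (c + 1) = W * V ^ c` for some `c`. -/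
def IsReduction (W V : Submodule k R) : Prop :=
  W ≤ V ∧ ∃ c, V ^ (c + 1) ≤ W * V ^ c

lemma pow_add_le_of_pow_succ_le {W V : Submodule k R} {c : ℕ} (h : V ^ (c + 1) ≤ W * V ^ c)
    (j : ℕ) : V ^ (c + j) ≤ W ^ j * V ^ c := by
  induction j with
  | zero => simp
  | succ j ih =>
    calc V ^ (c + (j + 1)) = V * V ^ (c + j) := by rw [← add_assoc, pow_succ']
      _ ≤ V * (W ^ j * V ^ c) := mul_le_mul_right ih _
      _ = W ^ j * V ^ (c + 1) := by rw [mul_left_comm, pow_succ']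
      _ ≤ W ^ j * (W * V ^ c) := mul_le_mul_right h _
      _ = W ^ (j + 1) * V ^ c := by rw [pow_succ, mul_assoc]

lemma IsReduction.refl (V : Submodule k R) : IsReduction V V :=
  ⟨le_rfl, 0, by simp⟩

lemma IsReduction.trans {U V W : Submodule k R} (hUV : IsReduction U V) (hVW : IsReduction V W) :
    IsReduction U W := by
  obtain ⟨hle, c, hc⟩ := hUV
  obtain ⟨hle', d, hd⟩ := hVW
  refine ⟨hle.trans hle', d + c, ?_⟩
  calc W ^ (d + c + 1) ≤ V ^ (c + 1) * W ^ d := by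
        rw [add_assoc]; exact pow_add_le_of_pow_succ_le hd _
    _ ≤ U * V ^ c * W ^ d := mul_le_mul_left hc _
    _ ≤ U * W ^ c * W ^ d := mul_le_mul_left (mul_le_mul_right (pow_le_pow_left' hle' c) _) _
    _ = U * W ^ (d + c) := by rw [mul_assoc, ← pow_add, add_comm c]

lemma sup_pow_succ_le (U T : Submodule k R) (e : ℕ) :
    (U ⊔ T) ^ (e + 1) ≤ U * (U ⊔ T) ^ e ⊔ T ^ (e + 1) := by
  induction e with
  | zero => simp
  | succ e ih =>
    calc (U ⊔ T) ^ (e + 1 + 1) = U * (U ⊔ T) ^ (e + 1) ⊔ T * (U ⊔ T) ^ (e + 1) := by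
          rw [pow_succ', Submodule.sup_mul]
      _ ≤ U * (U ⊔ T) ^ (e + 1) ⊔ (U * (T * (U ⊔ T) ^ e) ⊔ T ^ (e + 1 + 1)) := by
          refine sup_le_sup_left ((mul_le_mul_right ih _).trans_eq ?_) _
          rw [Submodule.mul_sup, mul_left_comm, ← pow_succ']
      _ ≤ U * (U ⊔ T) ^ (e + 1) ⊔ T ^ (e + 1 + 1) := by
          refine sup_le le_sup_left (sup_le_sup_right (mul_le_mul_right ?_ _) _)
          rw [pow_succ']
          exact mul_le_mul_left le_sup_right _

lemma isReduction_of_pow_mem {U W : Submodule k R} {t : R} {e : ℕ}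
    (hW : W = U ⊔ Submodule.span k {t}) (ht : t ^ (e + 1) ∈ U * W ^ e) : IsReduction U W := by
  refine ⟨hW ▸ le_sup_left, e, ?_⟩
  conv_lhs => rw [hW]
  refine (sup_pow_succ_le _ _ _).trans (sup_le (hW ▸ le_rfl) ?_)
  rwa [Submodule.span_pow, Set.singleton_pow, Submodule.span_singleton_le_iff_mem]

lemma map_aeval_homogeneousSubmodule {ι : Type*} (z : ι → R) (e : ℕ) :
    (homogeneousSubmodule ι k e).map (aeval z : MvPolynomial ι k →ₐ[k] R).toLinearMap =
      Submodule.span k (Set.range z) ^ e := by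
  rw [← homogeneousSubmodule_one_pow, Submodule.map_pow, homogeneousSubmodule_one_eq_span_X,
    Submodule.map_span, ← Set.range_comp]
  congr! 3
  ext i
  simp

lemma aeval_homogeneousComponent_eq_zero {V : Submodule k R} (hV : iSupIndep fun j : ℕ => V ^ j)
    {ι : Type*} {z : ι → R} (hz : ∀ i, z i ∈ V) {F : MvPolynomial ι k} (hF : aeval z F = 0)
    (e : ℕ) : aeval z (homogeneousComponent e F) = 0 := by
  have hmem (i : ℕ) : aeval z (homogeneousComponent i F) ∈ V ^ i := by
    refine pow_le_pow_left' (Submodule.span_le.2 (Set.range_subset_iff.2 hz)) i ?_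
    rw [← map_aeval_homogeneousSubmodule]
    exact Submodule.mem_map_of_mem (homogeneousComponent_isHomogeneous i F)
  rcases le_or_gt e F.totalDegree with he | he
  · rw [← sum_homogeneousComponent F, map_sum] at hF
    exact (iSupIndep_iff_finsetSum_eq_zero_imp_eq_zero _).1 hV _ _ (fun i _ => hmem i) hF e
      (Finset.mem_range_succ_iff.2 he)
  · rw [homogeneousComponent_eq_zero _ _ he, map_zero]

lemma homogeneousSubmodule_one_eq_inf_ker_sup_span {ι : Type*} {l : ι → k} {τ : MvPolynomial ι k}
    (hτ : τ.IsHomogeneous 1) (hl : eval l τ = 1) :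
    homogeneousSubmodule ι k 1 =
      (homogeneousSubmodule ι k 1 ⊓ LinearMap.ker (aeval l).toLinearMap) ⊔
        Submodule.span k {τ} := by
  refine le_antisymm (fun m hm => ?_) (sup_le inf_le_left (by simpa using hτ))
  refine Submodule.mem_sup.2 ⟨m - eval l m • τ, ⟨sub_mem hm (Submodule.smul_mem _ _ hτ), ?_⟩,
    eval l m • τ, Submodule.smul_mem _ _ (Submodule.mem_span_singleton_self τ), sub_add_cancel _ _⟩
  simp [aeval_eq_eval, hl]

lemma exists_eq_add_smul_pow {ι : Type*} {l : ι → k} {F τ : MvPolynomial ι k} {e : ℕ}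
    (hF : F.IsHomogeneous (e + 1)) (hτ : τ.IsHomogeneous 1) (hl : eval l τ = 1) :
    ∃ G ∈ (homogeneousSubmodule ι k 1 ⊓ LinearMap.ker (aeval l).toLinearMap) *
      homogeneousSubmodule ι k 1 ^ e, F = G + eval l F • τ ^ (e + 1) := by
  set U := homogeneousSubmodule ι k 1 ⊓ LinearMap.ker (aeval l : _ →ₐ[k] k).toLinearMap
  have hsplit := homogeneousSubmodule_one_eq_inf_ker_sup_span hτ hl
  have hFmem : F ∈ homogeneousSubmodule ι k 1 ^ (e + 1) := by
    rwa [homogeneousSubmodule_one_pow]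
  rw [hsplit] at hFmem
  obtain ⟨G, hG, H, hH, rfl⟩ := Submodule.mem_sup.1 (sup_pow_succ_le _ _ _ hFmem)
  rw [← hsplit] at hG
  rw [Submodule.span_pow, Set.singleton_pow, Submodule.mem_span_singleton] at hH
  obtain ⟨c, rfl⟩ := hH
  have hker : U * homogeneousSubmodule ι k 1 ^ e ≤
      LinearMap.ker (aeval l : _ →ₐ[k] k).toLinearMap := by
    refine Submodule.mul_le.2 fun a ha b _ => ?_
    have ha0 : eval l a = 0 := ha.2
    simp [ha0]
  have hG0 : eval l G = 0 := by simpa [aeval_eq_eval] using hker hG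
  exact ⟨G, hG, by simp [hG0, hl]⟩

lemma toSubmodule_adjoin_eq_iSup_pow (W : Submodule k R) :
    Subalgebra.toSubmodule (Algebra.adjoin k (W : Set R)) = ⨆ j : ℕ, W ^ j := by
  refine le_antisymm ?_ (iSup_le fun j => ?_)
  · rw [Algebra.adjoin_eq_span, Submodule.span_le]
    intro x hx
    suffices ∃ j : ℕ, x ∈ W ^ j from Submodule.mem_iSup_of_mem this.choose this.choose_spec
    induction hx using Submonoid.closure_induction with
    | mem x hx => exact ⟨1, by simpa using hx⟩
    | one => exact ⟨0, pow_zero W ▸ Submodule.one_le.1 le_rfl⟩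
    | mul x y _ _ hx hy =>
      obtain ⟨i, hi⟩ := hx
      obtain ⟨j, hj⟩ := hy
      exact ⟨i + j, pow_add W i j ▸ Submodule.mul_mem_mul hi hj⟩
  · intro x hx
    induction hx using Submodule.pow_induction_on_left' with
    | algebraMap r => exact Subalgebra.algebraMap_mem _ r
    | add x y _ _ _ hx hy => exact add_mem hx hy
    | mem_mul w hw _ x _ hx => exact Subalgebra.mul_mem _ (Algebra.subset_adjoin hw) hx

lemma mem_of_mem_adjoin {V W : Submodule k R} (hV : iSupIndep fun j : ℕ => V ^ j) (hWV : W ≤ V)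
    {x : R} (hx : x ∈ V) (hxW : x ∈ Algebra.adjoin k (W : Set R)) : x ∈ W := by
  have hle : ⨆ j : ℕ, W ^ j ≤ W ⊔ ⨆ j ≠ 1, V ^ j := by
    refine iSup_le fun j => ?_
    rcases eq_or_ne j 1 with rfl | hj
    · exact (pow_one W).trans_le le_sup_left
    · exact (pow_le_pow_left' hWV j).trans (le_sup_of_le_right (le_iSup₂_of_le j hj le_rfl))
  rw [← Subalgebra.mem_toSubmodule, toSubmodule_adjoin_eq_iSup_pow] at hxW
  obtain ⟨w, hw, v, hv, rfl⟩ := Submodule.mem_sup.1 (hle hxW)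
  have hvV : v ∈ V ^ 1 := by
    rw [pow_one]
    exact (Submodule.add_mem_iff_right _ (hWV hw)).1 hx
  rw [Submodule.disjoint_def.1 (hV 1) v hvV hv, add_zero]
  exact hw

lemma finrank_homogeneousSubmodule [Nontrivial k] (ι : Type*) [Fintype ι] (j : ℕ) :
    Module.finrank k (homogeneousSubmodule ι k j) = (Fintype.card ι + j - 1).choose j := by
  classical
  have hset : {d : ι →₀ ℕ | d.degree = j} =
      (Finset.univ.finsuppAntidiag j : Finset (ι →₀ ℕ)) := by
    ext d
    simp [Finset.mem_finsuppAntidiag, Finsupp.degree_eq_sum]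
  rw [homogeneousSubmodule_eq_finsupp_supported, hset,
    (AddMonoidAlgebra.supportedEquivFinsupp _).finrank_eq, Module.finrank_finsupp_self,
    ← Nat.card_eq_fintype_card, Nat.card_coe_set_eq, Set.ncard_coe_finset,
    Finset.card_finsuppAntidiag_nat_eq_choose,
    Finset.card_univ]

end Reductions

section ExistenceOfReductions

open MvPolynomial

variable {k R : Type*} [Field k] [Infinite k] [CommRing R] [Algebra k R]

lemma exists_isReduction_finrank_lt {ι : Type*} [Fintype ι]
    {z : ι → R} {F : MvPolynomial ι k} {e : ℕ} (hF : F.IsHomogeneous (e + 1)) (hF0 : F ≠ 0)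
    (hz : aeval z F = 0) :
    ∃ W, IsReduction W (Submodule.span k (Set.range z)) ∧ Module.finrank k W < Fintype.card ι := by
  obtain ⟨l, hl⟩ : ∃ l, eval l F ≠ 0 := by
    by_contra! h
    exact hF0 (MvPolynomial.funext fun x => by simpa using h x)
  obtain ⟨i, hi⟩ : ∃ i, l i ≠ 0 := by
    by_contra! h
    obtain rfl : l = 0 := _root_.funext h
    exact hl (by rw [eval_zero, constantCoeff_eq]; exact hF.coeff_eq_zero (by simp))
  let τ : MvPolynomial ι k := (l i)⁻¹ • X i
  have hτ : τ ∈ homogeneousSubmodule ι k 1 := Submodule.smul_mem _ _ (isHomogeneous_X k i)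
  have hlτ : eval l τ = 1 := by simp [τ, hi]
  set U := homogeneousSubmodule ι k 1 ⊓ LinearMap.ker (aeval l : _ →ₐ[k] k).toLinearMap
  let φ : MvPolynomial ι k →ₐ[k] R := aeval z
  have hspan : Submodule.span k (Set.range z) = (homogeneousSubmodule ι k 1).map φ.toLinearMap := by
    rw [map_aeval_homogeneousSubmodule, pow_one]
  refine ⟨U.map φ.toLinearMap, isReduction_of_pow_mem (t := φ τ) (e := e) ?_ ?_, ?_⟩
  · rw [hspan, homogeneousSubmodule_one_eq_inf_ker_sup_span hτ hlτ, Submodule.map_sup,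
      Submodule.map_span, Set.image_singleton]
    rfl
  · obtain ⟨G, hG, hFG⟩ := exists_eq_add_smul_pow hF hτ hlτ
    have hsum : φ G + eval l F • φ τ ^ (e + 1) = 0 := by
      rw [← hz, ← map_pow, ← map_smul, ← map_add, ← hFG]
    rw [← Submodule.smul_mem_iff _ hl, eq_neg_of_add_eq_zero_right hsum, hspan,
      ← Submodule.map_pow, ← Submodule.map_mul]
    exact neg_mem (Submodule.mem_map_of_mem hG)
  · have hlt : U < homogeneousSubmodule ι k 1 := by
      refine lt_of_le_of_ne inf_le_left fun h => ?_
      have : eval l τ = 0 := (h ▸ hτ : τ ∈ U).2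
      exact one_ne_zero (hlτ.symm.trans this)
    have : Module.Finite k (homogeneousSubmodule ι k 1) := by
      rw [homogeneousSubmodule_one_eq_span_X]
      exact .span_of_finite k (Set.finite_range _)
    calc Module.finrank k (U.map φ.toLinearMap) ≤ Module.finrank k U :=
          Submodule.finrank_map_le _ _
      _ < Module.finrank k (homogeneousSubmodule ι k 1) := Submodule.finrank_lt_finrank_of_lt hlt
      _ = Fintype.card ι := by simp [finrank_homogeneousSubmodule]

theorem exists_isReduction_algebraicIndependent [Nontrivial R] {V : Submodule k R}
    [FiniteDimensional k V] (hV : iSupIndep fun j : ℕ => V ^ j) :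
    ∃ (d : ℕ) (y : Fin d → R), AlgebraicIndependent k y ∧
      IsReduction (Submodule.span k (Set.range y)) V := by
  obtain ⟨W, hWV : IsReduction W V, hmin⟩ := WellFounded.has_min
    (measure fun W : Submodule k R => Module.finrank k W).wf {W | IsReduction W V} ⟨V, .refl V⟩
  have : FiniteDimensional k W := Submodule.finiteDimensional_of_le hWV.1
  let b := Module.finBasis k W
  let z : Fin (Module.finrank k W) → R := fun i => b i
  have hspan : Submodule.span k (Set.range z) = W := span_range_coe_basis b
  refine ⟨_, z, ?_, by rwa [hspan]⟩
  rw [algebraicIndependent_iff]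
  intro F hF
  rw [← sum_homogeneousComponent F]
  refine Finset.sum_eq_zero fun e _ => by_contra fun hne => ?_
  have hFe := aeval_homogeneousComponent_eq_zero hV (fun i => hWV.1 (b i).2) hF e
  obtain _ | e := e
  · rw [homogeneousComponent_zero, aeval_C] at hFe
    rw [homogeneousComponent_zero, (map_eq_zero _).1 hFe, C_0] at hne
    exact hne rfl
  · obtain ⟨W', hW', hlt⟩ :=
      exists_isReduction_finrank_lt (homogeneousComponent_isHomogeneous _ F) hne hFe
    rw [hspan] at hW'
    exact hmin W' (hW'.trans hWV) (hlt.trans_eq (Fintype.card_fin _))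

end ExistenceOfReductions

section ReductionFinrank

open MvPolynomial Module

lemma mem_range_algebraMap_of_isIntegral_of_mul_eq {A B : Type*} [CommRing A] [CommRing B]
    [IsDomain A] [IsDomain B] [Algebra A B] [FaithfulSMul A B] [IsIntegrallyClosed A] {t : B}
    (ht : IsIntegral A t) {a b : A} (hb : b ≠ 0) (h : t * algebraMap A B b = algebraMap A B a) :
    t ∈ (algebraMap A B).range := by
  have hdvd : minpoly A t ∣ .C b * .X - .C a :=
    minpoly.isIntegrallyClosed_dvd ht (by
      rw [map_sub, map_mul, Polynomial.aeval_C, Polynomial.aeval_C, Polynomial.aeval_X, ← h,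
        mul_comm, sub_self])
  have hdeg : (minpoly A t).degree ≤ 1 :=
    (Polynomial.degree_le_of_dvd hdvd (by
      intro h0
      simpa [hb] using congrArg (Polynomial.coeff · 1) h0)).trans (by compute_degree)
  refine minpoly.mem_range_of_degree_eq_one A t (hdeg.antisymm ?_)
  exact (Polynomial.degree_eq_natDegree (minpoly.ne_zero ht)).symm ▸
    Nat.one_le_cast.2 (minpoly.natDegree_pos ht)

variable {k R : Type*} [Field k] [CommRing R] [Algebra k R] {V W : Submodule k R}

lemma finrank_mul_le (V W : Submodule k R) [FiniteDimensional k V] [FiniteDimensional k W] :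
    finrank k (V * W : Submodule k R) ≤ finrank k V * finrank k W := by
  rw [← Submodule.mulMap_range, ← finrank_tensorProduct (R := k) (S := k)]
  exact LinearMap.finrank_range_le _

lemma finrank_span_range_pow {ι : Type*} [Fintype ι] {y : ι → R} (hy : AlgebraicIndependent k y)
    (j : ℕ) :
    finrank k (Submodule.span k (Set.range y) ^ j : Submodule k R) =
      (Fintype.card ι + j - 1).choose j := by
  rw [← map_aeval_homogeneousSubmodule, ← finrank_homogeneousSubmodule (k := k) ι j]
  exact (Submodule.equivMapOfInjective (aeval y).toLinearMap hy _).finrank_eq.symm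

lemma IsReduction.isIntegral [IsDomain R] [FiniteDimensional k V] (h : IsReduction W V) {x : R}
    (hx : x ∈ V) : IsIntegral (Algebra.adjoin k (W : Set R)) x := by
  rcases eq_or_ne x 0 with rfl | hx0
  · exact isIntegral_zero
  obtain ⟨-, c, hc⟩ := h
  obtain ⟨s, hs⟩ := (Submodule.fg_iff_finiteDimensional V).2 inferInstance |>.pow c
  let M := Submodule.span (Algebra.adjoin k (W : Set R)) ((V ^ c : Submodule k R) : Set R)
  have hle : W * V ^ c ≤ M.restrictScalars k := Submodule.mul_le.2 fun w hw v hv =>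
    M.smul_mem ⟨w, Algebra.subset_adjoin hw⟩ (Submodule.subset_span hv)
  refine isIntegral_of_smul_mem_submodule M (fun hM => ?_) ⟨s, ?_⟩ x fun m hm => ?_
  · have : x ^ c ∈ M := Submodule.subset_span (Submodule.pow_mem_pow _ hx c)
    rw [hM, Submodule.mem_bot] at this
    exact pow_ne_zero c hx0 this
  · rw [← Submodule.span_span_of_tower k, hs]
  · induction hm using Submodule.span_induction with
    | mem m hm =>
      exact hle (hc (pow_succ' V c ▸ Submodule.mul_mem_mul hx hm))
    | zero => simp
    | add _ _ _ _ h₁ h₂ => rw [smul_add]; exact add_mem h₁ h₂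
    | smul a m _ hm => rw [smul_comm]; exact M.smul_mem a hm

instance [FiniteDimensional k V] (j : ℕ) : FiniteDimensional k (V ^ j : Submodule k R) :=
  .of_fg ((Submodule.fg_iff_finiteDimensional V).2 inferInstance |>.pow j)

theorem IsReduction.exists_finrank_pow_add_le [FiniteDimensional k V] {ι : Type*} [Fintype ι]
    {y : ι → R} (hy : AlgebraicIndependent k y)
    (hred : IsReduction (Submodule.span k (Set.range y)) V) :
    ∃ c M : ℕ, ∀ j,
      finrank k (V ^ (c + j) : Submodule k R) ≤ M * (Fintype.card ι + j - 1).choose j := by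
  obtain ⟨-, c, hc⟩ := hred
  have : FiniteDimensional k (Submodule.span k (Set.range y)) :=
    .span_of_finite k (Set.finite_range y)
  refine ⟨c, finrank k (V ^ c : Submodule k R), fun j => ?_⟩
  rw [mul_comm, ← finrank_span_range_pow hy]
  have : FiniteDimensional k (Submodule.span k (Set.range y) ^ j * V ^ c : Submodule k R) :=
    .of_fg (.mul (.of_finite) .of_finite)
  exact (Submodule.finrank_mono (pow_add_le_of_pow_succ_le hc j)).trans (finrank_mul_le _ _)

-- `t` is integral over the integrally closed `k[W]`, so `t * b ∈ k[W]` would put `t` in `k[W]`.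
lemma IsReduction.disjoint_pow_map_mulLeft_pow [IsDomain R] [FiniteDimensional k V]
    (hV : iSupIndep fun j : ℕ => V ^ j) [IsIntegrallyClosed (Algebra.adjoin k (W : Set R))]
    (hred : IsReduction W V) {t : R} (ht : t ∈ V) (htW : t ∉ W) (i j : ℕ) :
    Disjoint (W ^ i) ((W ^ j).map (LinearMap.mulLeft k t)) := by
  have hmem (i : ℕ) {x : R} (hx : x ∈ W ^ i) : x ∈ Algebra.adjoin k (W : Set R) := by
    rw [← Subalgebra.mem_toSubmodule, toSubmodule_adjoin_eq_iSup_pow]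
    exact Submodule.mem_iSup_of_mem i hx
  rw [Submodule.disjoint_def]
  rintro _ ha ⟨b, hb, rfl⟩
  by_contra hne
  obtain ⟨s, rfl⟩ := mem_range_algebraMap_of_isIntegral_of_mul_eq (hred.isIntegral ht)
    (a := ⟨_, hmem _ ha⟩) (b := ⟨b, hmem _ hb⟩)
    (fun hb0 => hne (by rw [show b = 0 from Subtype.ext_iff.1 hb0, map_zero])) rfl
  exact htW (mem_of_mem_adjoin hV hred.1 ht s.2)

theorem IsReduction.add_choose_le_finrank_pow_succ [IsDomain R] [FiniteDimensional k V]
    (hV : iSupIndep fun j : ℕ => V ^ j) {ι : Type*} [Fintype ι] {y : ι → R}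
    (hy : AlgebraicIndependent k y) (hred : IsReduction (Submodule.span k (Set.range y)) V)
    (hne : Submodule.span k (Set.range y) ≠ V) (j : ℕ) :
    (Fintype.card ι + j).choose (j + 1) + (Fintype.card ι + j - 1).choose j ≤
      finrank k (V ^ (j + 1) : Submodule k R) := by
  obtain ⟨t, ht, htW⟩ := SetLike.exists_of_lt (hred.1.lt_of_ne hne)
  set W := Submodule.span k (Set.range y) with hW
  have : IsIntegrallyClosed (Algebra.adjoin k (W : Set R)) := by
    rw [hW, Algebra.adjoin_span]
    exact .of_equiv hy.aevalEquiv.toRingEquiv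
  have hWfin : FiniteDimensional k W := .span_of_finite k (Set.finite_range y)
  have ht0 : t ≠ 0 := fun h => htW (h ▸ zero_mem W)
  have hinj : Function.Injective (LinearMap.mulLeft k t) := mul_right_injective₀ ht0
  have hdisj := hred.disjoint_pow_map_mulLeft_pow hV ht htW (j + 1) j
  have hle : W ^ (j + 1) ⊔ (W ^ j).map (LinearMap.mulLeft k t) ≤ V ^ (j + 1) := by
    refine sup_le (pow_le_pow_left' hred.1 _) ?_
    rintro _ ⟨b, hb, rfl⟩
    exact pow_succ' V j ▸ Submodule.mul_mem_mul ht (pow_le_pow_left' hred.1 j hb)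
  calc _ = finrank k (W ^ (j + 1) : Submodule k R) +
        finrank k ((W ^ j).map (LinearMap.mulLeft k t)) := by
        rw [← (Submodule.equivMapOfInjective _ hinj _).finrank_eq, hW, finrank_span_range_pow hy,
          finrank_span_range_pow hy]
        rfl
    _ = finrank k ↥(W ^ (j + 1) ⊔ (W ^ j).map (LinearMap.mulLeft k t)) := by
        rw [← Submodule.finrank_sup_add_finrank_inf_eq, hdisj.eq_bot, finrank_bot, add_zero]
    _ ≤ finrank k (V ^ (j + 1) : Submodule k R) := Submodule.finrank_mono hle

end ReductionFinrank

section HilbertPolynomial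

open Polynomial

lemma coeff_le_coeff_of_eventually_eval_le {𝕜 : Type*} [NormedField 𝕜] [LinearOrder 𝕜]
    [IsStrictOrderedRing 𝕜] [Archimedean 𝕜] [OrderTopology 𝕜] {P Q : 𝕜[X]} {D : ℕ}
    (hP : P.natDegree ≤ D) (hQ : Q.natDegree ≤ D)
    (h : ∀ᶠ j : ℕ in Filter.atTop, P.eval (j : 𝕜) ≤ Q.eval (j : 𝕜)) : P.coeff D ≤ Q.coeff D := by
  by_contra! hlt
  have hcoeff : (Q - P).coeff D < 0 := by rwa [coeff_sub, sub_neg]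
  have hdeg : (Q - P).natDegree = D :=
    ((natDegree_sub_le _ _).trans (max_le hQ hP)).antisymm (le_natDegree_of_ne_zero hcoeff.ne)
  have hlead : (Q - P).leadingCoeff < 0 := by rwa [leadingCoeff, hdeg]
  have hneg : ∀ᶠ j : ℕ in Filter.atTop, (Q - P).eval (j : 𝕜) < 0 := by
    rcases D.eq_zero_or_pos with rfl | hD
    · rw [eq_C_of_natDegree_eq_zero hdeg]
      simpa only [eval_C] using Filter.Eventually.of_forall fun _ => hcoeff
    · exact tendsto_natCast_atTop_atTop.eventually <|
        ((Q - P).tendsto_atBot_of_leadingCoeff_nonpos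
          (natDegree_pos_iff_degree_pos.1 (hdeg ▸ hD)) hlead.le).eventually_lt_atBot 0
  obtain ⟨j, hj, hj'⟩ := (h.and hneg).exists
  rw [eval_sub, sub_neg] at hj'
  exact hj.not_gt hj'

lemma coeff_taylor_of_natDegree_le {A : Type*} [CommRing A] {P : A[X]} {D : ℕ}
    (h : P.natDegree ≤ D) (r : A) : (taylor r P).coeff D = P.coeff D := by
  rcases h.eq_or_lt with rfl | h
  · rw [coeff_taylor_natDegree, leadingCoeff]
  · rw [coeff_eq_zero_of_natDegree_lt h,
      coeff_eq_zero_of_natDegree_lt ((natDegree_taylor P r).trans_lt h)]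

lemma eval_preHilbertPoly_zero (D j : ℕ) :
    (preHilbertPoly ℚ D 0).eval (j : ℚ) = (D + j).choose j := by
  rw [preHilbertPoly_eq_choose_sub_add ℚ D j.zero_le, Nat.sub_zero, add_comm,
    Nat.choose_symm_add]

variable {P : ℚ[X]} {H : ℕ → ℕ} {d c M : ℕ}

lemma natDegree_lt_of_eventually_le_choose (hlead : 0 < P.leadingCoeff)
    (hP : ∀ᶠ j : ℕ in Filter.atTop, (H j : ℚ) = P.eval (j : ℚ))
    (hup : ∀ j, H (c + j) ≤ M * (d + j - 1).choose j) : P.natDegree < d := by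
  have hPc : ∀ᶠ j : ℕ in Filter.atTop,
      (taylor (c : ℚ) P).eval (j : ℚ) ≤ M * ((d + j - 1).choose j : ℕ) := by
    filter_upwards [(Filter.tendsto_add_atTop_nat c).eventually hP] with j hj
    rw [taylor_eval, ← Nat.cast_add, ← hj, add_comm]
    exact_mod_cast hup j
  by_contra! hd
  obtain ⟨Q, hQ, hQcoeff, hQeval⟩ : ∃ Q : ℚ[X], Q.natDegree ≤ P.natDegree ∧
      Q.coeff P.natDegree = 0 ∧ ∀ j : ℕ, 0 < j → ((d + j - 1).choose j : ℚ) = Q.eval (j : ℚ) := by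
    obtain _ | D := d
    · refine ⟨0, by simp, by simp, fun j hj => ?_⟩
      rw [Nat.choose_eq_zero_of_lt (by lia), Nat.cast_zero, eval_zero]
    · have hdeg := natDegree_preHilbertPoly ℚ D 0
      refine ⟨preHilbertPoly ℚ D 0, by lia, coeff_eq_zero_of_natDegree_lt (by lia), fun j _ => ?_⟩
      rw [eval_preHilbertPoly_zero, Nat.add_right_comm, Nat.add_sub_cancel]
  have hle := coeff_le_coeff_of_eventually_eval_le (natDegree_taylor P (c : ℚ)).le
    ((natDegree_C_mul_le (M : ℚ) Q).trans hQ) (by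
      filter_upwards [hPc, Filter.eventually_gt_atTop 0] with j hj hj0
      rwa [eval_C_mul, ← hQeval j hj0])
  rw [coeff_taylor_of_natDegree_le le_rfl, coeff_C_mul, hQcoeff, mul_zero] at hle
  exact hle.not_gt hlead

theorem factorial_mul_leadingCoeff_ne_one
    (hP : ∀ᶠ j : ℕ in Filter.atTop, (H j : ℚ) = P.eval (j : ℚ))
    (hup : ∀ j, H (c + j) ≤ M * (d + j - 1).choose j)
    (hlow : ∀ j, (d + j).choose (j + 1) + (d + j - 1).choose j ≤ H (j + 1)) :
    (P.natDegree.factorial : ℚ) * P.leadingCoeff ≠ 1 := by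
  intro hmult
  have hlead : P.leadingCoeff = (P.natDegree.factorial : ℚ)⁻¹ := eq_inv_of_mul_eq_one_right hmult
  have hPd := natDegree_lt_of_eventually_le_choose (hlead ▸ by positivity) hP hup
  obtain ⟨D, rfl⟩ := Nat.exists_eq_add_one_of_ne_zero (Nat.ne_zero_of_lt hPd)
  replace hPd : P.natDegree ≤ D := Nat.le_of_lt_succ hPd
  let Q := preHilbertPoly ℚ D 0
  have hQ : Q.natDegree = D := natDegree_preHilbertPoly ℚ D 0
  have hQcoeff : Q.coeff D = (D.factorial : ℚ)⁻¹ := coeff_preHilbertPoly_self ℚ D 0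
  have hpos : 0 < (D.factorial : ℚ)⁻¹ := by positivity
  have hle := coeff_le_coeff_of_eventually_eval_le (P := taylor 1 Q + Q) (Q := taylor 1 P) (D := D)
    (natDegree_add_le_of_degree_le ((natDegree_taylor _ _).trans_le hQ.le) hQ.le)
    ((natDegree_taylor _ _).trans_le hPd) (by
      filter_upwards [(Filter.tendsto_add_atTop_nat 1).eventually hP] with j hj
      rw [eval_add, taylor_eval, taylor_eval, ← Nat.cast_add_one, ← hj, eval_preHilbertPoly_zero,
        eval_preHilbertPoly_zero]
      have := hlow j
      rw [Nat.add_right_comm, Nat.add_sub_cancel] at this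
      exact_mod_cast this)
  rw [coeff_add, coeff_taylor_of_natDegree_le hQ.le, coeff_taylor_of_natDegree_le hPd,
    hQcoeff] at hle
  rcases hPd.eq_or_lt with rfl | hlt
  · rw [coeff_natDegree, hlead] at hle
    linarith
  · rw [coeff_eq_zero_of_natDegree_lt hlt] at hle
    linarith

end HilbertPolynomial

section MultiplicityOne

open MvPolynomial

attribute [local instance] MvPolynomial.gradedAlgebra

lemma iSupIndep_map_mk_homogeneousSubmodule {k σ : Type*} [CommRing k]
    {p : Ideal (MvPolynomial σ k)} (hp : p.IsHomogeneous (homogeneousSubmodule σ k)) :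
    iSupIndep fun j : ℕ =>
      (homogeneousSubmodule σ k j).map (Ideal.Quotient.mkₐ k p).toLinearMap := by
  rw [iSupIndep_iff_finsetSum_eq_zero_imp_eq_zero]
  intro s v hv hsum i hi
  choose! w hw hwv using hv
  have hmem : ∑ j ∈ s, w j ∈ p := by
    rw [← Ideal.Quotient.eq_zero_iff_mem, map_sum, ← hsum]
    exact Finset.sum_congr rfl hwv
  have hcomp : homogeneousComponent i (∑ j ∈ s, w j) = w i := by
    rw [map_sum, Finset.sum_eq_single_of_mem i hi fun j hj hji => ?_]
    · rw [homogeneousComponent_of_mem (hw i hi), if_pos rfl]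
    · rw [homogeneousComponent_of_mem (hw j hj), if_neg hji.symm]
  rw [← hwv i hi]
  exact Ideal.Quotient.eq_zero_iff_mem.2 (hcomp ▸ homogeneousComponent_mem_of_mem hp hmem i)

theorem exists_algebraicIndependent_span_eq_of_hilbertSamuelMultiplicity_eq_one {k : Type u}
    [Field k] [Infinite k] {N : ℕ} {p : Ideal (MvPolynomial (Fin N) k)} [p.IsPrime]
    (hp : p.IsHomogeneous (homogeneousSubmodule (Fin N) k))
    (hmult : hilbertSamuelMultiplicity k p = 1) :
    ∃ (d : ℕ) (y : Fin d → MvPolynomial (Fin N) k ⧸ p), AlgebraicIndependent k y ∧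
      Submodule.span k (Set.range y) =
        (homogeneousSubmodule (Fin N) k 1).map (Ideal.Quotient.mkₐ k p).toLinearMap := by
  set V := (homogeneousSubmodule (Fin N) k 1).map (Ideal.Quotient.mkₐ k p).toLinearMap with hVdef
  have hpow (j : ℕ) :
      V ^ j = (homogeneousSubmodule (Fin N) k j).map (Ideal.Quotient.mkₐ k p).toLinearMap := by
    rw [hVdef, ← Submodule.map_pow, homogeneousSubmodule_one_pow]
  have hV : iSupIndep fun j : ℕ => V ^ j := by
    simpa only [hpow] using iSupIndep_map_mk_homogeneousSubmodule hp
  have : FiniteDimensional k V := .of_fg ((homogeneousSubmodule_fg _ _ 1).map _)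
  have hH (j : ℕ) : hilbertFunction k p j = Module.finrank k (V ^ j : Submodule k _) := by
    rw [hilbertFunction, hpow]
  obtain ⟨d, y, hy, hred⟩ := exists_isReduction_algebraicIndependent hV
  refine ⟨d, y, hy, by_contra fun hne => ?_⟩
  obtain ⟨c, M, hup⟩ := hred.exists_finrank_pow_add_le hy
  have hlow := hred.add_choose_le_finrank_pow_succ hV hy hne
  simp only [← hH, Fintype.card_fin] at hup hlow
  unfold hilbertSamuelMultiplicity at hmult
  split_ifs at hmult with h
  · exact factorial_mul_leadingCoeff_ne_one h.choose_spec hup hlow hmult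
  · exact zero_ne_one hmult

lemma eq_span_of_algebraicIndependent {k σ ι : Type*} [Field k] {p : Ideal (MvPolynomial σ k)}
    {y : ι → MvPolynomial σ k ⧸ p} (hy : AlgebraicIndependent k y)
    (hspan : Submodule.span k (Set.range y) =
      (homogeneousSubmodule σ k 1).map (Ideal.Quotient.mkₐ k p).toLinearMap) :
    p = Ideal.span ((homogeneousSubmodule σ k 1 ⊓ p.restrictScalars k :
      Submodule k (MvPolynomial σ k)) : Set (MvPolynomial σ k)) := by
  set J := Ideal.span
    ((homogeneousSubmodule σ k 1 ⊓ p.restrictScalars k : Submodule k (MvPolynomial σ k)) :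
      Set (MvPolynomial σ k))
  have hJp : J ≤ p := Ideal.span_le.2 fun g hg => hg.2
  have hlift (i : ι) : ∃ w, w.IsHomogeneous 1 ∧ Ideal.Quotient.mkₐ k p w = y i :=
    hspan.le (Submodule.subset_span ⟨i, rfl⟩)
  choose w hw hwy using hlift
  have hwF (F : MvPolynomial ι k) : Ideal.Quotient.mkₐ k p (aeval w F) = aeval y F := by
    rw [← AlgHom.comp_apply, comp_aeval, funext hwy]
  have hX (i : σ) : ∃ L : MvPolynomial ι k, X i - aeval w L ∈ J := by
    have hXi : Ideal.Quotient.mkₐ k p (X i) ∈ Submodule.span k (Set.range y) ^ 1 := by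
      rw [pow_one, hspan]
      exact Submodule.mem_map_of_mem (isHomogeneous_X k i)
    rw [← map_aeval_homogeneousSubmodule] at hXi
    obtain ⟨L, hL, hLX⟩ := hXi
    have hwL : (aeval w L).IsHomogeneous 1 := by
      simpa using IsHomogeneous.aeval hL w hw
    exact ⟨L, Ideal.subset_span ⟨(isHomogeneous_X k i).sub hwL,
      Ideal.Quotient.eq.1 (hLX.symm.trans (hwF L).symm)⟩⟩
  choose L hL using hX
  have hmod : (Ideal.Quotient.mkₐ k J).comp ((aeval w).comp (aeval L)) = Ideal.Quotient.mkₐ k J :=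
    algHom_ext fun i => by simpa using (Ideal.Quotient.eq.2 (hL i)).symm
  refine le_antisymm (fun g hg => ?_) hJp
  have hgJ : g - aeval w (aeval L g) ∈ J := Ideal.Quotient.eq.1 (AlgHom.congr_fun hmod g).symm
  have hzero : aeval y (aeval L g) = 0 := by
    rw [← hwF]
    exact Ideal.Quotient.eq_zero_iff_mem.2 ((p.sub_mem_iff_right hg).1 (hJp hgJ))
  rwa [(algebraicIndependent_iff.1 hy) _ hzero, map_zero, sub_zero] at hgJ

end MultiplicityOne

section LinearIdeals

open MvPolynomial

attribute [local instance] MvPolynomial.gradedAlgebra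

lemma isPrime_span_X_image {R σ : Type*} [CommRing R] [IsDomain R] (s : Set σ) :
    (Ideal.span (X '' s : Set (MvPolynomial σ R))).IsPrime := by
  classical
  set J := Ideal.span (X '' s : Set (MvPolynomial σ R))
  let κ : MvPolynomial σ R →ₐ[R] MvPolynomial σ R := aeval fun i => if i ∈ s then 0 else X i
  have hmem {i : σ} (hi : i ∈ s) : X i ∈ J := Ideal.subset_span ⟨i, hi, rfl⟩
  have hmk : (Ideal.Quotient.mkₐ R J).comp κ = Ideal.Quotient.mkₐ R J := by
    refine algHom_ext fun i => ?_
    by_cases hi : i ∈ s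
    · simpa [κ, hi] using (Ideal.Quotient.eq_zero_iff_mem.2 (hmem hi)).symm
    · simp [κ, hi]
  have hker : J = RingHom.ker κ := by
    refine le_antisymm (Ideal.span_le.2 ?_) fun g hg => ?_
    · rintro _ ⟨i, hi, rfl⟩
      simp [κ, hi]
    · have := AlgHom.congr_fun hmk g
      rw [AlgHom.comp_apply, (RingHom.mem_ker).1 hg, map_zero] at this
      exact Ideal.Quotient.eq_zero_iff_mem.1 this.symm
  exact hker ▸ RingHom.ker_isPrime κ

lemma height_span_X_image {R σ : Type*} [CommRing R] [IsDomain R]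
    [IsNoetherianRing (MvPolynomial σ R)] (s : Finset σ) :
    (Ideal.span (X '' s : Set (MvPolynomial σ R))).height = s.card := by
  classical
  refine le_antisymm ?_ ?_
  · have := isPrime_span_X_image (R := R) (s : Set σ)
    rw [← Finset.coe_image]
    refine (Ideal.height_le_card_of_mem_minimalPrimes_span_finset (s := s.image X) ?_).trans
      (Nat.cast_le.2 Finset.card_image_le)
    rw [Finset.coe_image, Ideal.minimalPrimes_eq_subsingleton_self]
    rfl
  · induction s using Finset.induction_on with
    | empty => simp
    | insert i s hi ih =>
      have := isPrime_span_X_image (R := R) (s : Set σ)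
      have := isPrime_span_X_image (R := R) ((insert i s : Finset σ) : Set σ)
      have hlt : Ideal.span (X '' s : Set (MvPolynomial σ R)) <
          Ideal.span (X '' (insert i s : Finset σ)) := by
        refine SetLike.lt_iff_le_and_exists.2 ⟨Ideal.span_mono (Set.image_mono (by simp)), X i,
          Ideal.subset_span ⟨i, by simp, rfl⟩, fun hXi => hi ?_⟩
        obtain ⟨j, hj, hij⟩ := mem_ideal_span_X_image.1 hXi (.single i 1) (by simp)
        rwa [(Finsupp.single_apply_ne_zero.1 hij).1] at hj
      calc ((insert i s).card : ℕ∞) = s.card + 1 := by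
            rw [Finset.card_insert_of_notMem hi, Nat.cast_add_one]
        _ ≤ (Ideal.span (X '' s : Set (MvPolynomial σ R))).height + 1 := by gcongr
        _ ≤ _ := Ideal.height_add_one_le_of_lt_of_isPrime hlt

lemma height_span_range_of_linearIndependent {k σ ι : Type*} [Field k] [Finite σ] [Fintype ι]
    {u : ι → MvPolynomial σ k} (hu : ∀ i, (u i).IsHomogeneous 1) (hli : LinearIndependent k u) :
    (Ideal.span (Set.range u)).height = Fintype.card ι := by
  obtain ⟨E, e, he⟩ := exists_algEquiv_of_linearIndependent hu hli
  have : IsNoetherianRing (MvPolynomial (ι ⊕ E) k) :=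
    isNoetherianRing_of_ringEquiv _ e.symm.toRingEquiv
  let s : Finset (ι ⊕ E) := Finset.univ.map .inl
  have hmap : (Ideal.span (X '' s : Set (MvPolynomial (ι ⊕ E) k))).map e.toRingEquiv =
      Ideal.span (Set.range u) := by
    rw [Ideal.map_span, Set.image_image, Finset.coe_map, Finset.coe_univ, Set.image_image,
      Set.image_univ]
    exact congrArg _ (congrArg _ (funext he))
  rw [← hmap, RingEquiv.height_map, height_span_X_image, Finset.card_map, Finset.card_univ]

lemma heightENat_eq_height {R : Type u} [CommRing R] (p : Ideal R) [hp : p.IsPrime] :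
    p.heightENat = p.height := by
  refine Eq.trans ?_ (PrimeSpectrum.height_eq_orderHeight ⟨p, hp⟩).symm
  exact le_antisymm (iInf₂_le (⟨p, hp⟩ : PrimeSpectrum R) le_rfl)
    (le_iInf₂ fun q hq => Order.height_mono hq)

lemma homogeneousComponent_add_mul {R σ : Type*} [CommSemiring R] {f g : MvPolynomial σ R} {n : ℕ}
    (hg : g.IsHomogeneous n) (m : ℕ) :
    homogeneousComponent (m + n) (f * g) = homogeneousComponent m f * g := by
  rw [← decomposition.decompose'_apply, ← decomposition.decompose'_apply]
  exact DirectSum.coe_decompose_mul_add_of_right_mem (homogeneousSubmodule σ R) hg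

lemma exists_homogeneous_coeffs {k σ ι : Type*} [CommRing k] [Fintype ι]
    {u : ι → MvPolynomial σ k} {m n : ℕ} (hu : ∀ i, (u i).IsHomogeneous n)
    {f : MvPolynomial σ k} (hf : f.IsHomogeneous (m + n)) (hfu : f ∈ Ideal.span (Set.range u)) :
    ∃ a : ι → MvPolynomial σ k, (∀ i, (a i).IsHomogeneous m) ∧ f = ∑ i, a i * u i := by
  obtain ⟨g, rfl⟩ := (Submodule.mem_span_range_iff_exists_fun _).1 hfu
  refine ⟨fun i => homogeneousComponent m (g i), fun i => homogeneousComponent_isHomogeneous m _,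
    ?_⟩
  rw [← homogeneousComponent_eq_self hf, map_sum]
  exact Finset.sum_congr rfl fun i _ => homogeneousComponent_add_mul (hu i) m

end LinearIdeals

section PrimesOfMultiplicityOne

open MvPolynomial

attribute [local instance] MvPolynomial.gradedAlgebra

theorem exists_linear_generators_of_hilbertSamuelMultiplicity_eq_one {k : Type u} [Field k]
    [Infinite k] {N : ℕ} {p : Ideal (MvPolynomial (Fin N) k)} [p.IsPrime]
    (hp : p.IsHomogeneous (homogeneousSubmodule (Fin N) k))
    (hmult : hilbertSamuelMultiplicity k p = 1) :
    ∃ (r : ℕ) (u : Fin r → MvPolynomial (Fin N) k), (∀ i, (u i).IsHomogeneous 1) ∧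
      LinearIndependent k u ∧ p = Ideal.span (Set.range u) := by
  obtain ⟨d, y, hy, hspan⟩ :=
    exists_algebraicIndependent_span_eq_of_hilbertSamuelMultiplicity_eq_one hp hmult
  set W : Submodule k (MvPolynomial (Fin N) k) :=
    homogeneousSubmodule (Fin N) k 1 ⊓ p.restrictScalars k
  have : FiniteDimensional k (homogeneousSubmodule (Fin N) k 1) :=
    .of_fg (homogeneousSubmodule_fg _ _ 1)
  have : FiniteDimensional k W := Submodule.finiteDimensional_inf_left _ _
  let b := Module.finBasis k W
  refine ⟨_, fun i => b i, fun i => (b i).2.1, b.linearIndependent.map' W.subtype W.ker_subtype, ?_⟩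
  calc p = Ideal.span (W : Set (MvPolynomial (Fin N) k)) :=
        eq_span_of_algebraicIndependent hy hspan
    _ = Ideal.span (Submodule.span k (Set.range fun i => (b i : MvPolynomial (Fin N) k)) :
          Set (MvPolynomial (Fin N) k)) := by rw [span_range_coe_basis]
    _ = _ := Submodule.span_span_of_tower k _ _

theorem pd_le_of_assoc_prime_mult_one_general {k : Type u} [Field k] [Infinite k] {N : ℕ}
    {ι : Type} [Fintype ι] {f : ι → MvPolynomial (Fin N) k} (hf : ∀ i, (f i).IsHomogeneous 2)
    {p : Ideal (MvPolynomial (Fin N) k)} [p.IsPrime]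
    (hp : p.IsHomogeneous (homogeneousSubmodule (Fin N) k)) (hfp : ∀ i, f i ∈ p)
    {h : ℕ} (hh : 3 ≤ h) (hheight : p.heightENat = h) (hmult : hilbertSamuelMultiplicity k p = 1) :
    projDim (MvPolynomial (Fin N) k) (MvPolynomial (Fin N) k ⧸ Ideal.span (Set.range f)) ≤
      (h * Fintype.card ι + (h - 2) : ℕ) := by
  obtain ⟨r, u, hu, hli, rfl⟩ :=
    exists_linear_generators_of_hilbertSamuelMultiplicity_eq_one hp hmult
  obtain rfl : r = h := by
    rw [heightENat_eq_height, height_span_range_of_linearIndependent hu hli, Fintype.card_fin]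
      at hheight
    exact_mod_cast hheight
  choose a ha hfa using fun i => exists_homogeneous_coeffs (m := 1) hu (hf i) (hfp i)
  have hpd := hasProjectiveDimensionLE_span_sum_mul ha hu hli (by rwa [Fintype.card_fin])
  rw [← funext hfa, Fintype.card_fin] at hpd
  exact projDim_le_of_hasProjectiveDimensionLE hpd

end PrimesOfMultiplicityOne

/-- If `I` is a homogeneous ideal generated by `n` quadrics in a polynomial ring over an
algebraically closed field, and `I` has an associated prime `p` with `height p = 3` and
Hilbert–Samuel multiplicity `e(S/p) = 1`, then the stated bound on `pd_S(S/I)` holds. -/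
theorem pd_le_of_assoc_prime_mult_one (k : Type u) [Field k] [IsAlgClosed k] (N : ℕ) (n : ℕ)
    (f : Fin n → MvPolynomial (Fin N) k)
    (hf : ∀ i, (f i).IsHomogeneous 2)
    (I : Ideal (MvPolynomial (Fin N) k))
    (hI : I = Ideal.span (Set.range f))
    (p : Ideal (MvPolynomial (Fin N) k))
    (hp : IsAssociatedPrime p (MvPolynomial (Fin N) k ⧸ I))
    (hpht : p.heightENat = 3)
    (hpe : hilbertSamuelMultiplicity k p = 1) :
    projDim (MvPolynomial (Fin N) k) (MvPolynomial (Fin N) k ⧸ I) ≤ (3 * n + 1 : ℕ) := by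
  subst hI
  have := hp.isPrime
  have := IsAlgClosed.instInfinite (K := k)
  have hIp : Ideal.span (Set.range f) ≤ p := by
    simpa only [Submodule.annihilator_top, Ideal.annihilator_quotient] using hp.annihilator_le
  simpa using pd_le_of_assoc_prime_mult_one_general hf
    (isHomogeneous_of_isAssociatedPrime_span hf hp)
    (fun i => hIp (Ideal.subset_span ⟨i, rfl⟩)) le_rfl hpht hpe
end
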